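/- arXiv:1603.03942 — 3 statements merged into one kernel-verified Lean document; each statement's English description precedes it below -/
import Mathlib

section
/- Fix integers n, m ≥ 1 and let Q be the tensor product quiver A_n ⊗ A_m: the vertex set is V = {1,…,n} × {1,…,m}, ε(i,j) ≡ i + j (mod 2), A((i,j),(i',j')) = 1 if j = j' and |i − i'| = 1 and 0 otherwise, and B((i,j),(i',j')) = 1 if i = i' and |j − j'| = 1 and 0 otherwise. Then for every λ : V → ℝ the tropical T-system satisfies f^λ(t + 2(n+m+2), v) = f^λ(t, v) for all v ∈ V and t ∈ ℤ with t + ε(v) even. -/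
/-!
Periodicity is proved for nowhere vanishing solutions of the `T`-system over the reals and then
transported to the tropical semifield.

Over the reals, the `T`-system of `A_n ⊗ A_m` is the octahedron recurrence in a box whose boundary
values are all `1`. Given vectors `v k` in `ℝ ^ (n + 1)`, put
`D i a b = det (v a, …, v (a + i - 1), v b, …, v (b + n - i))`. The three-term Plücker relation
(`plucker`) says that `D i a (a + i + j)` satisfies the recurrence when it is read as the value at
the vertex `(i, j)` and the time `2 a + i + j`. If moreover `v (k + N) = (-1) ^ n • v k` with
`N = n + m + 2`, and all minors of `n + 1` consecutive vectors are `1`, then the boundary values at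
`i = 0`, `i = n + 1`, `j = 0` and `j = m + 1` are `1` as well (`vol_rotate_all`). Such a family is
visibly invariant under `a ↦ a + N` (`vol_shift`), that is, under a shift of the time by `2 N`.

Every nowhere vanishing solution is of this form. Its values on the slice `a = 0` determine the
vectors `v 0, …, v (N - 1)` successively, by triangular linear systems (`exists_vectors`), and the
recurrence propagates the equality from that slice to all `a ≥ 0` (`tsystem_periodic`). The initial
slice can be placed at any time, which gives periodicity at all times.

For the tropical system `g`, let `L_s` be the solution of the real `T`-system with initial values
`exp (s * g)`. As `log (p + q)` differs from `max (log p) (log q)` by at most `log 2`, the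
difference `log L_s - s * g` is bounded uniformly in `s > 0` (`boxSolution_log_bound`). The
periodicity of `L_s` then bounds `s * |g (a + N) - g a|` uniformly in `s`, so `g (a + N) = g a`.
-/

open scoped BigOperators

/-- The tropical `T`-system associated with a bipartite quiver, with initial value `lam`. -/
def IsTropicalTSystem {V : Type} [Fintype V] (eps : V → ℤ) (A B : V → V → ℕ)
    (lam : V → ℝ) (f : ℤ → V → ℝ) : Prop :=
  (∀ v, f (eps v) v = lam v) ∧
  (∀ (t : ℤ) (v : V), Odd (t + eps v) →
    f (t + 1) v + f (t - 1) v =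
      max (∑ u, (A v u : ℝ) * f t u) (∑ u, (B v u : ℝ) * f t u))

/-- The bipartition of the tensor product `A_n ⊗ A_m`. -/
def tensorEps (n m : ℕ) : Fin n × Fin m → ℤ :=
  fun p => ((p.1 : ℕ) + (p.2 : ℕ) : ℤ) % 2

/-- The `Γ`-edges of the tensor product `A_n ⊗ A_m`. -/
def tensorA (n m : ℕ) : Fin n × Fin m → Fin n × Fin m → ℕ :=
  fun p q => if p.2 = q.2 ∧ ((p.1 : ℕ) + 1 = (q.1 : ℕ) ∨ (q.1 : ℕ) + 1 = (p.1 : ℕ))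
    then 1 else 0

/-- The `Δ`-edges of the tensor product `A_n ⊗ A_m`. -/
def tensorB (n m : ℕ) : Fin n × Fin m → Fin n × Fin m → ℕ :=
  fun p q => if p.1 = q.1 ∧ ((p.2 : ℕ) + 1 = (q.2 : ℕ) ∨ (q.2 : ℕ) + 1 = (p.2 : ℕ))
    then 1 else 0

namespace TropicalBox

/-! ### Minors with two blocks of consecutive vectors -/

/-- The `n + 1` vectors `v a, …, v (a + i - 1), v b, …, v (b + n - i)`, in this order. -/
def blocks (n : ℕ) (v : ℕ → Fin (n + 1) → ℝ) (i a b : ℕ) : Fin (n + 1) → Fin (n + 1) → ℝ :=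
  fun l => if (l : ℕ) < i then v (a + l) else v (b + (l - i))

/-- The determinant of `n + 1` vectors of `ℝ ^ (n + 1)` as an alternating form. -/
noncomputable def vol (n : ℕ) : (Fin (n + 1) → ℝ) [⋀^Fin (n + 1)]→ₗ[ℝ] ℝ :=
  Matrix.detRowAlternating

/-- Sylvester's exchange relation: Cramer's rule expands the vector `d p` in terms of the vectors
`c k`, and the expansion is then substituted in the slot `p` of `d`. -/
lemma vol_mul_vol (n : ℕ) (c d : Fin (n + 1) → Fin (n + 1) → ℝ) (p : Fin (n + 1)) :
    vol n c * vol n d =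
      ∑ k, vol n (Function.update c k (d p)) * vol n (Function.update d p (c k)) := by
  have hc : vol n c • d p = ∑ k, vol n (Function.update c k (d p)) • c k := by
    have h := Matrix.mulVec_cramer (Matrix.of c).transpose (d p)
    rw [Matrix.det_transpose] at h
    ext x
    have hx := congrFun h x
    simp only [Matrix.mulVec, dotProduct, Matrix.cramer_transpose_apply, Pi.smul_apply] at hx
    simp only [Pi.smul_apply, Finset.sum_apply, vol]
    refine hx.symm.trans (Finset.sum_congr rfl fun k _ => ?_)
    rw [mul_comm]; rfl
  have h2 : vol n (Function.update d p (vol n c • d p)) = vol n c * vol n d := by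
    rw [AlternatingMap.map_update_smul, Function.update_eq_self, smul_eq_mul]
  rw [← h2, hc, AlternatingMap.map_update_sum]
  simp only [AlternatingMap.map_update_smul, smul_eq_mul]

/-- The three-term Plücker relation, which is the `T`-system for two-block minors. -/
lemma plucker (n : ℕ) (v : ℕ → Fin (n + 1) → ℝ) (r a b : ℕ) (hr : r < n) :
    vol n (blocks n v (r + 1) a b) * vol n (blocks n v (r + 1) (a + 1) (b + 1)) =
      vol n (blocks n v (r + 2) a (b + 1)) * vol n (blocks n v r (a + 1) b) +
      vol n (blocks n v (r + 1) a (b + 1)) * vol n (blocks n v (r + 1) (a + 1) b) := by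
  set c := blocks n v (r + 1) a b with hc
  set d := blocks n v (r + 1) (a + 1) (b + 1) with hd
  let p : Fin (n + 1) := ⟨r, by omega⟩
  let q : Fin (n + 1) := ⟨r + 1, by omega⟩
  have hdp : d p = v (a + 1 + r) := by simp [hd, blocks, p]
  have hc0 : c 0 = v a := by simp [hc, blocks]
  have hcq : c q = v b := by simp [hc, blocks, q]
  have hq0 : (0 : Fin (n + 1)) ≠ q := by simp [q, Fin.ext_iff]
  rw [vol_mul_vol n c d p, Finset.sum_eq_add 0 q hq0 ?_ (by simp) (by simp)]
  · have e1 : Function.update c q (d p) = blocks n v (r + 2) a (b + 1) := by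
      funext l
      by_cases hl : l = q
      · subst hl
        simp only [Function.update_self, hdp, blocks, q]
        rw [if_pos (by omega)]; congr 1; omega
      · have : (l : ℕ) ≠ r + 1 := fun h => hl (Fin.ext h)
        simp only [Function.update_of_ne hl, hc, blocks]
        split_ifs <;> first | omega | (congr 1; omega) | rfl
    have e2 : Function.update d p (c q) = blocks n v r (a + 1) b := by
      funext l
      by_cases hl : l = p
      · subst hl
        simp [hcq, blocks, p]
      · have : (l : ℕ) ≠ r := fun h => hl (Fin.ext h)
        simp only [Function.update_of_ne hl, hd, blocks]
        split_ifs <;> first | omega | (congr 1; omega) | rfl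
    -- The `k = 0` summand has its two factors off by the same cyclic permutation of the slots.
    have hval : ∀ l : Fin (n + 1), ((Fin.cycleRange p l : Fin (n + 1)) : ℕ) =
        if (l : ℕ) < r then (l : ℕ) + 1 else if (l : ℕ) = r then 0 else l := by
      intro l
      rcases lt_trichotomy (l : ℕ) r with h | h | h
      · have h' : l < p := h
        rw [Fin.coe_cycleRange_of_lt h', if_pos h]
      · have h' : l = p := Fin.ext h
        rw [Fin.cycleRange_of_eq h', if_neg (by omega), if_pos h]; rfl
      · have h' : p < l := h
        rw [Fin.cycleRange_of_gt h', if_neg (by omega), if_neg (by omega)]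
    have e3 : Function.update c 0 (d p) ∘ Fin.cycleRange p = blocks n v (r + 1) (a + 1) b := by
      funext l
      have hv := hval l
      simp only [Function.comp, Function.update_apply, Fin.ext_iff, hv, hdp, hc, blocks,
        Fin.val_zero]
      split_ifs <;> first | omega | contradiction | (congr 1; omega) | rfl
    have e4 : blocks n v (r + 1) a (b + 1) ∘ Fin.cycleRange p = Function.update d p (c 0) := by
      funext l
      have hv := hval l
      simp only [Function.comp, Function.update_apply, Fin.ext_iff, hv, hc0, hd, blocks, p]
      split_ifs <;> first | omega | (congr 1; omega) | rfl
    rw [e1, e2, ← e3, ← e4, AlternatingMap.map_perm, AlternatingMap.map_perm]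
    rcases Int.units_eq_one_or (Equiv.Perm.sign (Fin.cycleRange p)) with h | h <;>
      simp [h] <;> ring
  · intro k _ hk
    have hk0 : (k : ℕ) ≠ 0 := fun h => hk.1 (Fin.ext h)
    have hkq : (k : ℕ) ≠ r + 1 := fun h => hk.2 (Fin.ext h)
    have hkl := k.2
    -- `c k` already occurs in `d`, in the slot `k - 1`.
    let k' : Fin (n + 1) := ⟨k - 1, by omega⟩
    have hne : k' ≠ p := by
      simp only [k', p, ne_eq, Fin.ext_iff]; omega
    have : vol n (Function.update d p (c k)) = 0 := by
      refine AlternatingMap.map_eq_zero_of_eq _ _ (i := p) (j := k') ?_ hne.symm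
      rw [Function.update_self, Function.update_of_ne hne]
      simp only [hc, hd, blocks, k']
      split_ifs <;> first | omega | (congr 1; omega)
    rw [this, mul_zero]

/-! ### Realising prescribed minors -/

/-- Sliding the last vector of a list into the slot `i` only permutes the list. -/
lemma vol_slide_ne_zero (n : ℕ) (u : ℕ → Fin (n + 1) → ℝ) (i J : ℕ) (hi : i ≤ n)
    (h : vol n (blocks n u (i + 1) 0 (i + 1 + J)) ≠ 0) :
    vol n (Function.update (blocks n u i 0 (i + J + 1)) (Fin.last n) (u i)) ≠ 0 := by
  let s : Fin (n + 1) → Fin (n + 1) := fun l =>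
    if h1 : (l : ℕ) < i then l else if h2 : (l : ℕ) = n then ⟨i, by omega⟩
      else ⟨l + 1, by omega⟩
  have hs : Function.Injective s := by
    intro x y hxy
    simp only [s] at hxy
    apply Fin.ext
    split_ifs at hxy <;> simp only [Fin.ext_iff] at hxy <;> omega
  let σ : Equiv.Perm (Fin (n + 1)) := Equiv.ofBijective s (Finite.injective_iff_bijective.1 hs)
  have e : Function.update (blocks n u i 0 (i + J + 1)) (Fin.last n) (u i) =
      blocks n u (i + 1) 0 (i + 1 + J) ∘ σ := by
    funext l
    have hσ : σ l = s l := rfl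
    have hl := l.2
    simp only [Function.comp, hσ, s, Function.update_apply, Fin.ext_iff, Fin.val_last, blocks]
    split_ifs <;> simp_all <;> first | omega | (congr 1; omega)
  rw [e, AlternatingMap.map_perm]
  rcases Int.units_eq_one_or (Equiv.Perm.sign σ) with hσ | hσ <;>
    simp [hσ, h]

/-- Arbitrary nonzero values are realised by minors `v 0, …, v (i - 1), v (i + j), …, v (n + j)`:
the vector `v (n + j)` is the solution of a triangular linear system whose diagonal entries are,
up to sign, the values prescribed for `j - 1`. -/
lemma exists_vectors (n : ℕ) (x : ℕ → ℕ → ℝ) (hx : ∀ i j, x i j ≠ 0)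
    (hn : ∀ j, x (n + 1) j = 1) (h0 : ∀ i, x i 0 = 1) (J : ℕ) :
    ∃ u : ℕ → Fin (n + 1) → ℝ, ∀ j ≤ J, ∀ i ≤ n + 1, vol n (blocks n u i 0 (i + j)) = x i j := by
  induction J with
  | zero =>
    refine ⟨fun k l => if (l : ℕ) = k then 1 else 0, fun j hj i hi => ?_⟩
    obtain rfl : j = 0 := by omega
    have : blocks n (fun k l => if (l : ℕ) = k then 1 else 0) i 0 (i + 0) =
        (1 : Matrix (Fin (n + 1)) (Fin (n + 1)) ℝ) := by
      funext k l
      simp only [blocks, Matrix.one_apply, Fin.ext_iff]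
      split_ifs
      all_goals simp only [ite_eq_left_iff, ite_eq_right_iff]; omega
    rw [this, h0]
    exact Matrix.det_one
  | succ J ih =>
    obtain ⟨u, hu⟩ := ih
    let c : Fin (n + 1) → Fin (n + 1) → Fin (n + 1) → ℝ := fun i => blocks n u i 0 (i + J + 1)
    let P : Matrix (Fin (n + 1)) (Fin (n + 1)) ℝ := fun i l =>
      vol n (Function.update (c i) (Fin.last n) (u l))
    have hP : P.IsUpperTriangular := by
      intro i l hl
      have hl' : (l : ℕ) < i := hl
      have hi := i.2
      have hne : l ≠ Fin.last n := by
        simp only [ne_eq, Fin.ext_iff, Fin.val_last]; omega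
      refine AlternatingMap.map_eq_zero_of_eq _ _ (i := Fin.last n) (j := l) ?_ hne.symm
      rw [Function.update_self, Function.update_of_ne hne]
      simp [c, blocks, hl']
    have hdet : IsUnit P.det := by
      rw [Matrix.det_of_isUpperTriangular hP, isUnit_iff_ne_zero, Finset.prod_ne_zero_iff]
      intro i _
      refine vol_slide_ne_zero n u i J (by omega) ?_
      rw [hu J le_rfl (i + 1) (by omega)]
      exact hx _ _
    let w : Fin (n + 1) → ℝ := P⁻¹.mulVec fun i => x i (J + 1)
    have hw : P.mulVec w = fun i : Fin (n + 1) => x i (J + 1) := by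
      rw [Matrix.mulVec_mulVec, Matrix.mul_nonsing_inv _ hdet, Matrix.one_mulVec]
    let y : Fin (n + 1) → ℝ := ∑ l : Fin (n + 1), w l • u l
    have hy : ∀ i : Fin (n + 1), vol n (Function.update (c i) (Fin.last n) y) = x i (J + 1) := by
      intro i
      rw [AlternatingMap.map_update_sum]
      simp only [AlternatingMap.map_update_smul, smul_eq_mul]
      rw [← congrFun hw i]
      exact Finset.sum_congr rfl fun l _ => mul_comm _ _
    have hold : ∀ j ≤ J, ∀ i ≤ n + 1,
        vol n (blocks n (Function.update u (n + J + 1) y) i 0 (i + j)) = x i j := by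
      intro j hj i hi
      rw [← hu j hj i hi]
      congr 1
      funext l
      have := l.2
      simp only [blocks]
      split_ifs <;> rw [Function.update_of_ne (by omega)]
    refine ⟨Function.update u (n + J + 1) y, fun j hj i hi => ?_⟩
    rcases Nat.lt_or_ge J j with hJ | hJ
    · obtain rfl : j = J + 1 := by omega
      rcases Nat.lt_or_ge n i with hin | hin
      · obtain rfl : i = n + 1 := by omega
        rw [hn, ← hn 0, ← hold 0 (by omega) (n + 1) le_rfl]
        congr 1
        funext l
        simp only [blocks, if_pos l.2]
      · rw [← hy ⟨i, by omega⟩]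
        congr 1
        funext l
        have := l.2
        simp only [blocks, c, Function.update_apply, Fin.ext_iff, Fin.val_last]
        split_ifs <;> first | omega | rfl
    · exact hold j hJ i hi

/-! ### Quasi-periodic sequences of vectors and the box boundary -/

/-- Rotating the first vector of the first block to the end of the second one: the sign of the
cyclic permutation is cancelled by the sign in the quasi-periodicity. -/
lemma vol_rotate (n m : ℕ) (v : ℕ → Fin (n + 1) → ℝ)
    (hv : ∀ k, v (k + (n + m + 2)) = (-1 : ℝ) ^ n • v k) (i a : ℕ) (hi : i ≤ n) :
    vol n (blocks n v (i + 1) a (a + (i + 1) + (m + 1))) =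
      vol n (blocks n v i (a + 1) (a + 1 + i + (m + 1))) := by
  set c := blocks n v (i + 1) a (a + (i + 1) + (m + 1)) with hc
  have e : blocks n v i (a + 1) (a + 1 + i + (m + 1)) =
      Function.update (c ∘ finRotate (n + 1)) (Fin.last n)
        ((-1 : ℝ) ^ n • (c ∘ finRotate (n + 1)) (Fin.last n)) := by
    funext l
    by_cases hl : l = Fin.last n
    · subst hl
      have h0 : (c ∘ finRotate (n + 1)) (Fin.last n) = v a := by
        simp [hc, blocks]
      rw [Function.update_self, h0, ← hv a]
      simp only [blocks, Fin.val_last]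
      rw [if_neg (by omega)]
      congr 1; omega
    · rw [Function.update_of_ne hl]
      have := coe_finRotate_of_ne_last hl
      simp only [Function.comp, hc, blocks, this]
      split_ifs <;> first | omega | (congr 1; omega)
  rw [e, AlternatingMap.map_update_smul, Function.update_eq_self, AlternatingMap.map_perm,
    sign_finRotate]
  rcases Nat.even_or_odd n with h | h <;> simp [h]

/-- Repeated rotation: on the face `j = m + 1` the two blocks close up, cyclically, to a single
block of consecutive vectors. -/
lemma vol_rotate_all (n m : ℕ) (v : ℕ → Fin (n + 1) → ℝ)
    (hv : ∀ k, v (k + (n + m + 2)) = (-1 : ℝ) ^ n • v k) (i : ℕ) (hi : i ≤ n + 1) : ∀ a,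
    vol n (blocks n v i a (a + i + (m + 1))) = vol n (blocks n v 0 0 (a + i + (m + 1))) := by
  induction i with
  | zero => intro a; congr 1
  | succ i ih =>
    intro a
    rw [vol_rotate n m v hv i a (by omega), ih (by omega)]
    congr 2; omega

lemma vol_shift (n m : ℕ) (v : ℕ → Fin (n + 1) → ℝ)
    (hv : ∀ k, v (k + (n + m + 2)) = (-1 : ℝ) ^ n • v k) (i a b : ℕ) :
    vol n (blocks n v i (a + (n + m + 2)) (b + (n + m + 2))) = vol n (blocks n v i a b) := by
  have e : blocks n v i (a + (n + m + 2)) (b + (n + m + 2)) =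
      fun l => ((-1 : ℝ) ^ n) • blocks n v i a b l := by
    funext l
    simp only [blocks]
    split_ifs <;> rw [← hv] <;> congr 1 <;> omega
  have h := (vol n).toMultilinearMap.map_smul_univ (fun _ => (-1 : ℝ) ^ n) (blocks n v i a b)
  have h2 : (-1 : ℝ) ^ (n * (n + 1)) = 1 := (Nat.even_mul_succ_self n).neg_one_pow
  rw [e]
  refine h.trans ?_
  simp [← pow_mul, h2]

/-! ### Periodicity of the `T`-system over the nonzero reals -/

/-- Periodicity of the `T`-system of `A_n ⊗ A_m`, in the coordinates in which `X i j a` is the value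
at the vertex `(i, j)` and the time `2 a + i + j`. -/
theorem tsystem_periodic (n m : ℕ) (X : ℕ → ℕ → ℕ → ℝ) (hX : ∀ i j a, X i j a ≠ 0)
    (hi0 : ∀ j a, X 0 j a = 1) (hin : ∀ j a, X (n + 1) j a = 1)
    (hj0 : ∀ i a, X i 0 a = 1) (hjm : ∀ i a, X i (m + 1) a = 1)
    (hrec : ∀ i j a, i < n → j < m → X (i + 1) (j + 1) (a + 1) * X (i + 1) (j + 1) a =
      X (i + 2) (j + 1) a * X i (j + 1) (a + 1) + X (i + 1) (j + 2) a * X (i + 1) j (a + 1))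
    (i j a : ℕ) (hi : i ≤ n + 1) (hj : j ≤ m + 1) :
    X i j (a + (n + m + 2)) = X i j a := by
  obtain ⟨u, hu⟩ := exists_vectors n (fun i j => X i j 0) (fun i j => hX i j 0)
    (fun j => hin j 0) (fun i => hj0 i 0) (m + 1)
  let v : ℕ → Fin (n + 1) → ℝ := fun k =>
    ((-1 : ℝ) ^ n) ^ (k / (n + m + 2)) • u (k % (n + m + 2))
  have hv : ∀ k, v (k + (n + m + 2)) = (-1 : ℝ) ^ n • v k := by
    intro k
    simp only [v]
    rw [Nat.add_div_right _ (by omega), Nat.add_mod_right, smul_smul, pow_succ, mul_comm]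
  have hvu : ∀ k, k < n + m + 2 → v k = u k := by
    intro k hk
    simp only [v]
    rw [Nat.div_eq_of_lt hk, Nat.mod_eq_of_lt hk, pow_zero, one_smul]
  have hinit : ∀ i j, i ≤ n + 1 → j ≤ m + 1 → vol n (blocks n v i 0 (i + j)) = X i j 0 := by
    intro i j hi hj
    rw [← hu j hj i hi]
    congr 1
    funext l
    have := l.2
    simp only [blocks]
    split_ifs <;> rw [hvu _ (by omega)]
  -- All minors of `n + 1` consecutive vectors are equal to `1`.
  have hW : ∀ b, vol n (blocks n v 0 0 b) = 1 := by
    intro b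
    induction b using Nat.strong_induction_on with
    | _ b ih =>
      rcases le_or_gt b (m + 1) with h | h
      · have := hinit 0 b (by omega) h
        rwa [zero_add, hi0] at this
      rcases le_or_gt b (n + m + 2) with h' | h'
      · obtain ⟨i, rfl⟩ : ∃ i, b = 0 + i + (m + 1) := ⟨b - (m + 1), by omega⟩
        rw [← vol_rotate_all n m v hv i (by omega) 0, zero_add, hinit i (m + 1) (by omega) le_rfl,
          hjm]
      · obtain ⟨k, rfl⟩ : ∃ k, b = k + (n + m + 2) := ⟨b - (n + m + 2), by omega⟩
        rw [← ih k (by omega), ← vol_shift n m v hv 0 0 k]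
        congr 1
  have hA : ∀ a b, vol n (blocks n v 0 a b) = 1 := by
    intro a b
    rw [← hW b]; congr 1
  have hB : ∀ a b, vol n (blocks n v (n + 1) a b) = 1 := by
    intro a b
    rw [← hW a]; congr 1
    funext l
    simp only [blocks, if_pos l.2]
    rw [if_neg (by omega), Nat.sub_zero]
  have hC : ∀ i a, i ≤ n + 1 → vol n (blocks n v i a (a + i)) = 1 := by
    intro i a hi
    rw [← hW a]; congr 1
    funext l
    simp only [blocks]
    split_ifs <;> congr 1 <;> omega
  have hD : ∀ i a, i ≤ n + 1 → vol n (blocks n v i a (a + i + (m + 1))) = 1 := by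
    intro i a hi
    rw [vol_rotate_all n m v hv i hi a, hW]
  have key : ∀ s i j a, 2 * a + i + j = s → i ≤ n + 1 → j ≤ m + 1 →
      X i j a = vol n (blocks n v i a (a + i + j)) := by
    intro s
    induction s using Nat.strong_induction_on with
    | _ s ih =>
      intro i j a hs hi hj
      rcases Nat.eq_zero_or_pos a with rfl | ha
      · rw [zero_add, hinit i j hi hj]
      rcases Nat.eq_zero_or_pos i with rfl | hi'
      · rw [hi0, hA]
      rcases Nat.eq_zero_or_pos j with rfl | hj'
      · rw [hj0, add_zero, hC i a hi]
      rcases eq_or_lt_of_le hi with rfl | hi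
      · rw [hin, hB]
      rcases eq_or_lt_of_le hj with rfl | hj
      · rw [hjm, hD i a (by omega)]
      obtain ⟨a, rfl⟩ : ∃ k, a = k + 1 := ⟨a - 1, by omega⟩
      obtain ⟨i, rfl⟩ : ∃ k, i = k + 1 := ⟨i - 1, by omega⟩
      obtain ⟨j, rfl⟩ : ∃ k, j = k + 1 := ⟨j - 1, by omega⟩
      have h1 := hrec i j a (by omega) (by omega)
      have h2 := plucker n v i a (a + (i + 1) + (j + 1)) (by omega)
      have h3 := hX (i + 1) (j + 1) a
      rw [ih (2 * a + (i + 2) + (j + 1)) (by omega) (i + 2) (j + 1) a rfl (by omega) (by omega),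
        ih (2 * (a + 1) + i + (j + 1)) (by omega) i (j + 1) (a + 1) rfl (by omega) (by omega),
        ih (2 * a + (i + 1) + (j + 2)) (by omega) (i + 1) (j + 2) a rfl (by omega) (by omega),
        ih (2 * (a + 1) + (i + 1) + j) (by omega) (i + 1) j (a + 1) rfl (by omega) (by omega)]
        at h1
      rw [show a + (i + 2) + (j + 1) = a + (i + 1) + (j + 1) + 1 by ring,
        show a + 1 + i + (j + 1) = a + (i + 1) + (j + 1) by ring,
        show a + (i + 1) + (j + 2) = a + (i + 1) + (j + 1) + 1 by ring,
        show a + 1 + (i + 1) + j = a + (i + 1) + (j + 1) by ring, ← h2,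
        ← ih (2 * a + (i + 1) + (j + 1)) (by omega) (i + 1) (j + 1) a rfl (by omega) (by omega)]
        at h1
      rw [show a + 1 + (i + 1) + (j + 1) = a + (i + 1) + (j + 1) + 1 by ring]
      apply mul_right_cancel₀ h3
      rw [h1, mul_comm]
  rw [key _ i j _ rfl hi hj, key _ i j a rfl hi hj, ← vol_shift n m v hv i a (a + i + j)]
  congr 2
  omega

/-! ### Dequantization -/

/-- The solution of the `T`-system in the box with initial values `y`; the first argument is the
coordinate `a` for which the time at the vertex `(i, j)` is `2 a + i + j`. For `a > 0` the value
outside `{1, …, n} × {1, …, m}` is set to `1`; for `a = 0` this is a condition on `y`. -/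
noncomputable def boxSolution (n m : ℕ) (y : ℕ → ℕ → ℝ) : ℕ → ℕ → ℕ → ℝ
  | 0, i, j => y i j
  | _ + 1, 0, _ => 1
  | _ + 1, _ + 1, 0 => 1
  | a + 1, i + 1, j + 1 =>
    if i < n ∧ j < m then
      (boxSolution n m y a (i + 2) (j + 1) * boxSolution n m y (a + 1) i (j + 1) +
        boxSolution n m y a (i + 1) (j + 2) * boxSolution n m y (a + 1) (i + 1) j) /
      boxSolution n m y a (i + 1) (j + 1)
    else 1
termination_by a i j => (a, i + j)

lemma boxSolution_step (n m : ℕ) (y : ℕ → ℕ → ℝ) (a i j : ℕ) (hi : i < n) (hj : j < m) :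
    boxSolution n m y (a + 1) (i + 1) (j + 1) =
      (boxSolution n m y a (i + 2) (j + 1) * boxSolution n m y (a + 1) i (j + 1) +
        boxSolution n m y a (i + 1) (j + 2) * boxSolution n m y (a + 1) (i + 1) j) /
      boxSolution n m y a (i + 1) (j + 1) := by
  rw [boxSolution, if_pos ⟨hi, hj⟩]

lemma boxSolution_boundary (n m : ℕ) (y : ℕ → ℕ → ℝ)
    (hy : ∀ i j, ¬ (1 ≤ i ∧ i ≤ n ∧ 1 ≤ j ∧ j ≤ m) → y i j = 1) (a i j : ℕ)
    (h : ¬ (1 ≤ i ∧ i ≤ n ∧ 1 ≤ j ∧ j ≤ m)) : boxSolution n m y a i j = 1 := by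
  rcases a with _ | a
  · rw [boxSolution]; exact hy i j h
  rcases i with _ | i
  · rw [boxSolution]
  rcases j with _ | j
  · rw [boxSolution]
  rw [boxSolution, if_neg (by omega)]

lemma boxSolution_pos (n m : ℕ) (y : ℕ → ℕ → ℝ) (hy : ∀ i j, 0 < y i j) (a i j : ℕ) :
    0 < boxSolution n m y a i j := by
  fun_induction boxSolution n m y a i j <;> first | exact hy _ _ | positivity

/-- The logarithm of a sum of two positive numbers is the maximum of the logarithms up to
`log 2`. -/
lemma abs_log_add_sub_max (p q : ℝ) (hp : 0 < p) (hq : 0 < q) :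
    |Real.log (p + q) - max (Real.log p) (Real.log q)| ≤ Real.log 2 := by
  wlog h : q ≤ p generalizing p q
  · rw [add_comm, max_comm]
    exact this q p hq hp (le_of_not_ge h)
  rw [max_eq_left (Real.log_le_log hq h)]
  have h1 : Real.log p ≤ Real.log (p + q) := Real.log_le_log hp (by linarith)
  have h2 : Real.log (p + q) ≤ Real.log (2 * p) := Real.log_le_log (by linarith) (by linarith)
  rw [Real.log_mul (by norm_num) hp.ne'] at h2
  rw [abs_of_nonneg (by linarith)]
  linarith

/-- The `T`-system with initial values `exp (s * g)` stays within a bounded distance, uniform in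
the scale `s`, of the rescaled tropical `T`-system on the logarithmic scale. -/
lemma boxSolution_log_bound (n m : ℕ) (g : ℕ → ℕ → ℕ → ℝ)
    (hg : ∀ i j a, ¬ (1 ≤ i ∧ i ≤ n ∧ 1 ≤ j ∧ j ≤ m) → g i j a = 0)
    (hrec : ∀ i j a, i < n → j < m → g (i + 1) (j + 1) (a + 1) + g (i + 1) (j + 1) a =
      max (g (i + 2) (j + 1) a + g i (j + 1) (a + 1))
        (g (i + 1) (j + 2) a + g (i + 1) j (a + 1))) :
    ∀ N i j a, 2 * a + i + j = N → ∃ C : ℝ, ∀ s : ℝ, 0 < s →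
      |Real.log (boxSolution n m (fun i j => Real.exp (s * g i j 0)) a i j) - s * g i j a| ≤ C := by
  intro N
  induction N using Nat.strong_induction_on with
  | _ N ih =>
    intro i j a hN
    by_cases hb : 1 ≤ i ∧ i ≤ n ∧ 1 ≤ j ∧ j ≤ m
    · rcases a with _ | a
      · exact ⟨0, fun s _ => by simp [boxSolution]⟩
      obtain ⟨i, rfl⟩ : ∃ k, i = k + 1 := ⟨i - 1, by omega⟩
      obtain ⟨j, rfl⟩ : ∃ k, j = k + 1 := ⟨j - 1, by omega⟩
      obtain ⟨C1, h1⟩ := ih _ (by omega) (i + 2) (j + 1) a rfl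
      obtain ⟨C2, h2⟩ := ih _ (by omega) i (j + 1) (a + 1) rfl
      obtain ⟨C3, h3⟩ := ih _ (by omega) (i + 1) (j + 2) a rfl
      obtain ⟨C4, h4⟩ := ih _ (by omega) (i + 1) j (a + 1) rfl
      obtain ⟨C5, h5⟩ := ih _ (by omega) (i + 1) (j + 1) a rfl
      refine ⟨Real.log 2 + max (C1 + C2) (C3 + C4) + C5, fun s hs => ?_⟩
      have hr := hrec i j a (by omega) (by omega)
      specialize h1 s hs
      specialize h2 s hs
      specialize h3 s hs
      specialize h4 s hs
      specialize h5 s hs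
      have hp := boxSolution_pos n m (fun i j => Real.exp (s * g i j 0)) (fun _ _ => Real.exp_pos _)
      rw [boxSolution_step _ _ _ _ _ _ (by omega) (by omega)]
      generalize boxSolution n m (fun i j => Real.exp (s * g i j 0)) = L at *
      have h6 := abs_log_add_sub_max _ _ (mul_pos (hp a (i + 2) (j + 1)) (hp (a + 1) i (j + 1)))
        (mul_pos (hp a (i + 1) (j + 2)) (hp (a + 1) (i + 1) j))
      rw [Real.log_div (by have := hp a (i + 2) (j + 1); have := hp (a + 1) i (j + 1)
                           have := hp a (i + 1) (j + 2); have := hp (a + 1) (i + 1) j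
                           positivity) (hp _ _ _).ne']
      rw [Real.log_mul (hp _ _ _).ne' (hp _ _ _).ne', Real.log_mul (hp _ _ _).ne' (hp _ _ _).ne']
        at h6
      have h7 := abs_max_sub_max_le_max
        (Real.log (L a (i + 2) (j + 1)) + Real.log (L (a + 1) i (j + 1)))
        (Real.log (L a (i + 1) (j + 2)) + Real.log (L (a + 1) (i + 1) j))
        (s * (g (i + 2) (j + 1) a + g i (j + 1) (a + 1)))
        (s * (g (i + 1) (j + 2) a + g (i + 1) j (a + 1)))
      have h8 : max
          |Real.log (L a (i + 2) (j + 1)) + Real.log (L (a + 1) i (j + 1)) -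
            s * (g (i + 2) (j + 1) a + g i (j + 1) (a + 1))|
          |Real.log (L a (i + 1) (j + 2)) + Real.log (L (a + 1) (i + 1) j) -
            s * (g (i + 1) (j + 2) a + g (i + 1) j (a + 1))| ≤ max (C1 + C2) (C3 + C4) := by
        rw [abs_le] at h1 h2 h3 h4
        refine max_le_max ?_ ?_ <;> rw [abs_le] <;> constructor <;> linarith
      rw [← mul_max_of_nonneg _ _ hs.le, ← hr] at h7
      have h9 := h7.trans h8
      rw [abs_le] at h5 h6 h9 ⊢
      constructor <;> linarith
    · refine ⟨0, fun s _ => ?_⟩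
      rw [boxSolution_boundary n m _ (fun i j h => by simp [hg i j 0 h]) a i j hb, hg i j a hb]
      simp

/-- Periodicity of the tropical `T`-system in the box, in the coordinates of
`tsystem_periodic`. -/
theorem tropical_periodic (n m : ℕ) (g : ℕ → ℕ → ℕ → ℝ)
    (hg : ∀ i j a, ¬ (1 ≤ i ∧ i ≤ n ∧ 1 ≤ j ∧ j ≤ m) → g i j a = 0)
    (hrec : ∀ i j a, i < n → j < m → g (i + 1) (j + 1) (a + 1) + g (i + 1) (j + 1) a =
      max (g (i + 2) (j + 1) a + g i (j + 1) (a + 1))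
        (g (i + 1) (j + 2) a + g (i + 1) j (a + 1)))
    (i j : ℕ) (hi : i ≤ n) (hj : j ≤ m) : g i j (n + m + 2) = g i j 0 := by
  obtain ⟨C, hC⟩ := boxSolution_log_bound n m g hg hrec _ i j (n + m + 2) rfl
  have hs : ∀ s : ℝ, 0 < s → s * |g i j 0 - g i j (n + m + 2)| ≤ C := by
    intro s hs
    have hp := boxSolution_pos n m (fun i j => Real.exp (s * g i j 0)) (fun _ _ => Real.exp_pos _)
    have hb := boxSolution_boundary n m (fun i j => Real.exp (s * g i j 0))
      (fun i j h => by simp [hg i j 0 h])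
    have hper := tsystem_periodic n m
      (fun i j a => boxSolution n m (fun i j => Real.exp (s * g i j 0)) a i j)
      (fun i j a => (hp a i j).ne') (fun j a => hb _ _ _ (by omega))
      (fun j a => hb _ _ _ (by omega)) (fun j a => hb _ _ _ (by omega))
      (fun j a => hb _ _ _ (by omega))
      (fun i j a hi hj => by
        simp only [boxSolution_step n m _ a i j hi hj]
        exact div_mul_cancel₀ _ (hp _ _ _).ne') i j 0 (by omega) (by omega)
    have h := hC s hs
    simp only [zero_add] at hper
    rw [hper, boxSolution, Real.log_exp, ← mul_sub, abs_mul, abs_of_pos hs] at h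
    exact h
  by_contra hne
  have hpos : 0 < |g i j 0 - g i j (n + m + 2)| := abs_pos.2 (sub_ne_zero.2 (Ne.symm hne))
  have hC0 : 0 ≤ C := le_trans (by positivity) (hs 1 one_pos)
  have := hs ((C + 1) / |g i j 0 - g i j (n + m + 2)|) (by positivity)
  rw [div_mul_cancel₀ _ hpos.ne'] at this
  linarith

/-! ### The quiver `A_n ⊗ A_m` -/

/-- Extension by zero of a function on `{1, …, n} × {1, …, m}`. The vertices of the quiver are
numbered from `0`, whence the shift of both coordinates. -/
noncomputable def extendZero (n m : ℕ) (F : Fin n × Fin m → ℝ) (i j : ℕ) : ℝ :=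
  if h : 1 ≤ i ∧ i ≤ n ∧ 1 ≤ j ∧ j ≤ m then
    F (⟨i - 1, by omega⟩, ⟨j - 1, by omega⟩) else 0

lemma sum_tensorA (n m : ℕ) (F : Fin n × Fin m → ℝ) (i j : ℕ) (hi : i < n) (hj : j < m) :
    ∑ u, (tensorA n m (⟨i, hi⟩, ⟨j, hj⟩) u : ℝ) * F u =
      extendZero n m F (i + 2) (j + 1) + extendZero n m F i (j + 1) := by
  have h1 : ∀ u : Fin n × Fin m, (tensorA n m (⟨i, hi⟩, ⟨j, hj⟩) u : ℝ) * F u =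
      (if (u.1 : ℕ) = i + 1 ∧ (u.2 : ℕ) = j then F u else 0) +
      (if (u.1 : ℕ) + 1 = i ∧ (u.2 : ℕ) = j then F u else 0) := by
    intro u
    simp only [tensorA, Fin.ext_iff]
    split_ifs <;> first | omega | simp
  simp only [h1, Finset.sum_add_distrib, extendZero]
  congr 1
  · split_ifs with h
    · rw [Finset.sum_eq_single (⟨i + 1, by omega⟩, ⟨j, hj⟩)]
      · simp
      · intro u _ hu
        rw [if_neg]
        rintro ⟨h2, h3⟩
        exact hu (Prod.ext (Fin.ext h2) (Fin.ext h3))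
      · simp
    · refine Finset.sum_eq_zero fun u _ => if_neg ?_
      have := u.1.2
      omega
  · split_ifs with h
    · rw [Finset.sum_eq_single (⟨i - 1, by omega⟩, ⟨j, hj⟩)]
      · simp; omega
      · intro u _ hu
        rw [if_neg]
        rintro ⟨h2, h3⟩
        exact hu (Prod.ext (Fin.ext (by simp; omega)) (Fin.ext h3))
      · simp
    · refine Finset.sum_eq_zero fun u _ => if_neg ?_
      have := u.1.2
      omega

lemma sum_tensorB (n m : ℕ) (F : Fin n × Fin m → ℝ) (i j : ℕ) (hi : i < n) (hj : j < m) :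
    ∑ u, (tensorB n m (⟨i, hi⟩, ⟨j, hj⟩) u : ℝ) * F u =
      extendZero n m F (i + 1) (j + 2) + extendZero n m F (i + 1) j := by
  have hswap : ∀ k l, extendZero m n (fun u => F u.swap) k l = extendZero n m F l k := by
    intro k l
    simp only [extendZero]
    split_ifs <;> first | omega | rfl
  rw [← hswap, ← hswap, ← sum_tensorA m n (fun u => F u.swap) j i hj hi]
  refine Fintype.sum_equiv (Equiv.prodComm _ _) _ _ fun u => ?_
  rfl

end TropicalBox

/-- the tropical `T`-system of the tensor product `A_n ⊗ A_m` is periodic with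
period `2(n + m + 2)` for every initial value `lam`. -/
theorem tensorAA_tropical_periodicity
    (n m : ℕ) (hn : 1 ≤ n) (hm : 1 ≤ m)
    (lam : Fin n × Fin m → ℝ) (f : ℤ → Fin n × Fin m → ℝ)
    (hf : IsTropicalTSystem (tensorEps n m) (tensorA n m) (tensorB n m) lam f) :
    ∀ (v : Fin n × Fin m) (t : ℤ), Even (t + tensorEps n m v) →
      f (t + 2 * ((n : ℤ) + m + 2)) v = f t v := by
  rintro ⟨⟨i, hi⟩, ⟨j, hj⟩⟩ t ht
  -- The time is measured so that `(i, j)` at time `t` has third coordinate `0`; as the shifted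
  -- indices are `i + 1` and `j + 1`, the origin of time is `t - (i + 1) - (j + 1)`.
  let t₀ : ℤ := t - i - j - 2
  let g : ℕ → ℕ → ℕ → ℝ := fun k l a => TropicalBox.extendZero n m (f (t₀ + 2 * a + k + l)) k l
  have hg : ∀ k l a, ¬ (1 ≤ k ∧ k ≤ n ∧ 1 ≤ l ∧ l ≤ m) → g k l a = 0 := by
    intro k l a h
    simp only [g, TropicalBox.extendZero, dif_neg h]
  have hgv : ∀ k l a (hk : k < n) (hl : l < m),
      g (k + 1) (l + 1) a = f (t₀ + 2 * a + (k + l + 2)) (⟨k, hk⟩, ⟨l, hl⟩) := by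
    intro k l a hk hl
    simp only [g, TropicalBox.extendZero]
    rw [dif_pos (by omega)]
    congr 1
    push_cast
    ring
  have hrec : ∀ k l a, k < n → l < m → g (k + 1) (l + 1) (a + 1) + g (k + 1) (l + 1) a =
      max (g (k + 2) (l + 1) a + g k (l + 1) (a + 1))
        (g (k + 1) (l + 2) a + g (k + 1) l (a + 1)) := by
    intro k l a hk hl
    have h := hf.2 (t₀ + 2 * a + (k + l + 3)) (⟨k, hk⟩, ⟨l, hl⟩) (by
      simp only [tensorEps, t₀] at ht ⊢
      rw [Int.even_iff] at ht
      rw [Int.odd_iff]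
      omega)
    rw [TropicalBox.sum_tensorA, TropicalBox.sum_tensorB] at h
    rw [hgv k l (a + 1) hk hl, hgv k l a hk hl]
    simp only [g]
    push_cast
    convert h using 3 <;> first | ring1 | (congr 2; ring1)
  have h := TropicalBox.tropical_periodic n m g hg hrec (i + 1) (j + 1) (by omega) (by omega)
  rw [hgv i j _ hi hj, hgv i j _ hi hj] at h
  convert h using 2
  · simp only [t₀]; push_cast; ring
  · simp only [t₀]; push_cast; ring
end

section
/- Fix integers n, m ≥ 1 and let Q be the tensor product quiver A_n ⊗ A_m: the vertex set is V = {1,…,n} × {1,…,m}, ε(i,j) ≡ i + j (mod 2), A((i,j),(i',j')) = 1 if j = j' and |i − i'| = 1 and 0 otherwise, and B((i,j),(i',j')) = 1 if i = i' and |j − j'| = 1 and 0 otherwise. Then the T-system associated with Q satisfies T(t + 2(n+m+2), v) = T(t, v) for all v ∈ V and t ∈ ℤ with t + ε(v) even. -/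
/-!
After the change of variables `S a i j = T (t₀ + 2 a + i + j) (i, j)` (with `1 ≤ i ≤ n`,
`1 ≤ j ≤ m`, and the value `1` on the border `i ∈ {0, n + 1}` or `j ∈ {0, m + 1}`) the `T`-system
becomes the octahedron recurrence
`S (a+1) i j * S a i j = S a (i+1) j * S (a+1) (i-1) j + S a i (j+1) * S (a+1) i (j-1)`.
The idea, following Volkov, is to realise `S a i j` as the `(n+1) × (n+1)` determinant
`P v a i j = det (v_a, …, v_{a+i-1}, v_{a+i+j}, …, v_{a+n+j})` of a sequence of vectors `v`.
These determinants satisfy the octahedron recurrence by the three-term Plücker relation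
(`P_octahedron`).

The sequence `v` is defined by a linear recurrence whose coefficients are the values `S a i 1`, so
that `P = S` for `j = 0` and `j = 1` (`P_one`). As `S` never vanishes, the recurrence can be solved
in the direction of increasing `j`, whence `P = S` for all `j ≤ m + 1`. The border condition then
reads `P v a i (m+1) = 1`, and one more step of the recurrence gives `P v a i (m+2) = 0` for
`1 ≤ i ≤ n`. These equations force `v_{a+n+m+2} = (-1) ^ n • v_a` (`antiperiodic`), and since
`(-1) ^ (n (n+1)) = 1`, the determinants have period `n + m + 2` in `a`, that is, period
`2 (n + m + 2)` in `t` (`octahedron_periodic`).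

Nonvanishing of `T` holds because the recurrence is subtraction-free: each value is a quotient of
two polynomials that are positive at the point all of whose coordinates are `1`
(`isPos_of_isTSystem`).
-/

open scoped BigOperators

/-- The `T`-system associated with a bipartite quiver: a family `T t v` of elements of the
field of fractions of `ℚ[x_v : v ∈ V]` satisfying
`T (t+1) v * T (t-1) v = ∏ u, T t u ^ A v u + ∏ u, T t u ^ B v u` whenever `t + eps v` is odd,
with initial conditions `T (eps v) v = x_v`. -/
def IsTSystem {V : Type} [Fintype V] (eps : V → ℤ) (A B : V → V → ℕ)
    (T : ℤ → V → FractionRing (MvPolynomial V ℚ)) : Prop :=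
  (∀ v, T (eps v) v =
      algebraMap (MvPolynomial V ℚ) (FractionRing (MvPolynomial V ℚ)) (MvPolynomial.X v)) ∧
  (∀ (t : ℤ) (v : V), Odd (t + eps v) →
    T (t + 1) v * T (t - 1) v = (∏ u, T t u ^ A v u) + (∏ u, T t u ^ B v u))

namespace TensorAA
variable {F : Type*} [Field F] {n : ℕ}

/-! ### Determinants of sequences of vectors -/

/-- The determinant with rows `f 0, …, f n`. The rows are indexed by `ℕ`, only the first `n + 1`
being used, so that rearrangements of rows can be described by arithmetic of indices. -/
noncomputable def D (f : ℕ → Fin (n + 1) → F) : F :=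
  Matrix.detRowAlternating (fun r : Fin (n + 1) => f r)

lemma D_congr {f g : ℕ → Fin (n + 1) → F} (h : ∀ r ≤ n, f r = g r) : D f = D g := by
  unfold D
  congr 1
  funext r
  exact h r (by omega)

lemma D_eq_zero {f : ℕ → Fin (n + 1) → F} {p q : ℕ} (hp : p ≤ n) (hq : q ≤ n) (hpq : p ≠ q)
    (h : f p = f q) : D f = 0 :=
  AlternatingMap.map_eq_zero_of_eq _ (fun r : Fin (n + 1) => f r)
    (i := ⟨p, by omega⟩) (j := ⟨q, by omega⟩) h (by simpa using hpq)

lemma D_swap (f : ℕ → Fin (n + 1) → F) {p q : ℕ} (hp : p ≤ n) (hq : q ≤ n) (hpq : p ≠ q) :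
    D (fun r => f (Equiv.swap p q r)) = - D f := by
  have h := AlternatingMap.map_swap (Matrix.detRowAlternating (R := F))
    (fun r : Fin (n + 1) => f r) (i := ⟨p, by omega⟩) (j := ⟨q, by omega⟩) (by simpa using hpq)
  unfold D
  rw [← h]
  congr 1
  funext r
  simp only [Function.comp, Equiv.swap_apply_def, Fin.ext_iff]
  split_ifs <;> rfl

/-- Moving row `p` down to position `p + d`, past `d` other rows, multiplies the determinant
by `(-1) ^ d`. -/
lemma D_rot (p d : ℕ) (f : ℕ → Fin (n + 1) → F) (h : p + d ≤ n) :
    D (fun r => if r < p then f r else if r < p + d then f (r + 1) else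
      if r = p + d then f p else f r) = (-1) ^ d * D f := by
  induction d with
  | zero =>
    rw [pow_zero, one_mul]
    refine D_congr fun r _ => ?_
    split_ifs <;> first | rfl | omega | (congr 1; omega)
  | succ d ih =>
    have h1 := D_swap (fun r => if r < p then f r else if r < p + d then f (r + 1) else
      if r = p + d then f p else f r) (p := p + d) (q := p + d + 1) (by omega) (by omega) (by omega)
    rw [ih (by omega)] at h1
    rw [pow_succ]
    rw [mul_neg_one, neg_mul, ← h1]
    refine D_congr fun r _ => ?_
    rw [Equiv.swap_apply_def]
    split_ifs <;> first | rfl | omega | (congr 1; omega)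

/-- The determinant as a linear function of row `p`, the other rows being those of `f`. -/
noncomputable def rowLin (f : ℕ → Fin (n + 1) → F) (p : ℕ) (hp : p ≤ n) :
    (Fin (n + 1) → F) →ₗ[F] F :=
  (Matrix.detRowAlternating (R := F)).toMultilinearMap.toLinearMap
    (fun r : Fin (n + 1) => f r) ⟨p, by omega⟩

lemma rowLin_apply (f : ℕ → Fin (n + 1) → F) (p : ℕ) (hp : p ≤ n) (u : Fin (n + 1) → F) :
    rowLin f p hp u = D (Function.update f p u) := by
  simp only [rowLin, D, MultilinearMap.toLinearMap_apply]
  change Matrix.detRowAlternating _ = _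
  congr 1
  funext r
  simp only [Function.update_apply, Fin.ext_iff]

lemma D_update_sum (f : ℕ → Fin (n + 1) → F) {p : ℕ} (hp : p ≤ n) {ι : Type*} (s : Finset ι)
    (c : ι → F) (g : ι → Fin (n + 1) → F) :
    D (Function.update f p (∑ l ∈ s, c l • g l)) =
      ∑ l ∈ s, c l * D (Function.update f p (g l)) := by
  rw [← rowLin_apply f p hp, map_sum]
  simp only [map_smul, smul_eq_mul, rowLin_apply]

/-- Cramer's rule, written without division. -/
lemma cramer (f : ℕ → Fin (n + 1) → F) (x : Fin (n + 1) → F) :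
    D f • x = ∑ l ∈ Finset.range (n + 1), D (Function.update f l x) • f l := by
  have h := Matrix.mulVec_cramer (Matrix.of fun r : Fin (n + 1) => f r).transpose x
  rw [Matrix.det_transpose] at h
  refine Eq.trans h.symm ?_
  rw [Finset.sum_range]
  funext c
  simp only [Matrix.mulVec, dotProduct, Finset.sum_apply, Pi.smul_apply, smul_eq_mul,
    Matrix.cramer_transpose_apply, Matrix.transpose_apply, Matrix.of_apply]
  refine Finset.sum_congr rfl fun l _ => ?_
  rw [mul_comm]
  congr 1
  unfold D
  change Matrix.detRowAlternating _ = _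
  congr 1
  funext r
  change Function.update (fun r : Fin (n + 1) => f r) l x r = _
  simp only [Function.update_apply, Fin.ext_iff]

/-- The three-term Plücker relation for determinants which agree outside rows `p` and `q`. Cramer's
rule expands `B x z • w` in the rows of `f` with `x`, `z` placed at `p`, `q`; substituting this
expansion for row `q` of `B y w` leaves only the terms along `x` and `z`. -/
lemma plucker (f : ℕ → Fin (n + 1) → F) {p q : ℕ} (hp : p ≤ n) (hq : q ≤ n) (hpq : p ≠ q)
    (w x y z : Fin (n + 1) → F) :
    let B := fun a b => D (Function.update (Function.update f p a) q b)
    B x z * B y w = B y z * B x w - B w z * B x y := by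
  intro B
  have hanti : B y x = - B x y := by
    rw [← D_swap _ hp hq hpq]
    refine D_congr fun r _ => ?_
    simp only [Function.update_apply, Equiv.swap_apply_def]
    split_ifs <;> first | rfl | omega
  have h := congrArg (rowLin (Function.update f p y) q hq)
    (cramer (Function.update (Function.update f p x) q z) w)
  rw [map_smul, map_sum] at h
  simp only [map_smul, smul_eq_mul, rowLin_apply] at h
  rw [Finset.sum_eq_add_of_mem p q (by simp; omega) (by simp; omega) hpq] at h
  · have e1 : Function.update (Function.update (Function.update f p x) q z) p w =
      Function.update (Function.update f p w) q z := by
      rw [Function.update_comm hpq.symm, Function.update_idem]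
    rw [e1, Function.update_idem, Function.update_self, Function.update_of_ne hpq,
      Function.update_self] at h
    change B x z * B y w = B w z * B y x + B x w * B y z at h
    rw [h, hanti]; ring
  · rintro l hl ⟨h1, h2⟩
    rw [Finset.mem_range] at hl
    rw [Function.update_of_ne h2, Function.update_of_ne h1,
      D_eq_zero (f := Function.update (Function.update f p y) q (f l)) (p := l) (q := q)
        (by omega) hq h2 (by simp [h1, h2]), mul_zero]

/-! ### The octahedron recurrence for two-block determinants -/

/-- The determinant `det (v_a, …, v_{a+i-1}, v_{a+i+j}, …, v_{a+n+j})`: two blocks of consecutive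
vectors, of lengths `i` and `n + 1 - i`, separated by a gap of length `j`. -/
noncomputable def P (v : ℕ → Fin (n + 1) → F) (a i j : ℕ) : F :=
  D (fun r => v (if r < i then a + r else a + r + j))

/-- The Plücker relation for the common vectors `v_{a+1}, …, v_{a+i}` and
`v_{a+i+j+3}, …, v_{a+n+j+1}` and the four vectors `v_a`, `v_{a+i+1}`, `v_{a+i+j+2}`,
`v_{a+n+j+2}`. -/
lemma P_octahedron (v : ℕ → Fin (n + 1) → F) (a i j : ℕ) (hi : i + 1 ≤ n) :
    P v (a + 1) (i + 1) (j + 1) * P v a (i + 1) (j + 1) =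
      P v a (i + 2) (j + 1) * P v (a + 1) i (j + 1) +
      P v a (i + 1) (j + 2) * P v (a + 1) (i + 1) j := by
  set f : ℕ → Fin (n + 1) → F :=
    fun r => v (if r < i + 1 then a + 1 + r else a + 1 + r + (j + 1)) with hf
  set B : (Fin (n + 1) → F) → (Fin (n + 1) → F) → F :=
    fun s t => D (Function.update (Function.update f i s) n t) with hB
  have key : B (v (a + 1 + i)) (v (a + 1 + n + (j + 1))) * B (v (a + i + j + 2)) (v a) = _ :=
    plucker f (p := i) (q := n) (by omega) le_rfl (by omega)
      (v a) (v (a + 1 + i)) (v (a + i + j + 2)) (v (a + 1 + n + (j + 1)))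
  -- Each bracket is brought to the standard order of its vectors by moving at most one row; the
  -- signs in the three products of `key` agree.
  have b1 : B (v (a + 1 + i)) (v (a + 1 + n + (j + 1))) = P v (a + 1) (i + 1) (j + 1) := by
    refine D_congr fun r _ => ?_
    simp only [hf, Function.update_apply]
    split_ifs <;> first | rfl | omega | (congr 1; omega)
  have b2 : B (v (a + i + j + 2)) (v a) = (-1) ^ n * P v a (i + 1) (j + 1) := by
    refine Eq.trans (D_congr fun r _ => ?_) (D_rot 0 n _ (by omega))
    simp only [hf, Function.update_apply]
    split_ifs <;> first | rfl | omega | (congr 1; omega)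
  have b3 : B (v (a + i + j + 2)) (v (a + 1 + n + (j + 1))) = P v (a + 1) i (j + 1) := by
    refine D_congr fun r _ => ?_
    simp only [hf, Function.update_apply]
    split_ifs <;> first | rfl | omega | (congr 1; omega)
  have b4 : B (v (a + 1 + i)) (v a) = (-1) ^ n * P v a (i + 2) (j + 1) := by
    refine Eq.trans (D_congr fun r _ => ?_) (D_rot 0 n _ (by omega))
    simp only [hf, Function.update_apply]
    split_ifs <;> first | rfl | omega | (congr 1; omega)
  have b5 : B (v a) (v (a + 1 + n + (j + 1))) = (-1) ^ i * P v a (i + 1) (j + 2) := by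
    refine Eq.trans (D_congr fun r _ => ?_) (D_rot 0 i _ (by omega))
    simp only [hf, Function.update_apply]
    split_ifs <;> first | rfl | omega | (congr 1; omega)
  have b6 : B (v (a + 1 + i)) (v (a + i + j + 2)) =
      (-1) ^ (n - i - 1) * P v (a + 1) (i + 1) j := by
    refine Eq.trans (D_congr fun r _ => ?_) (D_rot (i + 1) (n - i - 1) _ (by omega))
    simp only [hf, Function.update_apply]
    split_ifs <;> first | rfl | omega | (congr 1; omega)
  change _ = B (v (a + i + j + 2)) (v (a + 1 + n + (j + 1))) * B (v (a + 1 + i)) (v a) -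
    B (v a) (v (a + 1 + n + (j + 1))) * B (v (a + 1 + i)) (v (a + i + j + 2)) at key
  rw [b1, b2, b3, b4, b5, b6] at key
  obtain ⟨e, rfl⟩ : ∃ e, n = i + e + 1 := ⟨n - i - 1, by omega⟩
  rw [show i + e + 1 - i - 1 = e by omega] at key
  have hs : ((-1 : F) ^ (i + e)) * (-1) ^ (i + e) = 1 := by
    rw [← mul_pow]; simp
  rw [pow_succ, pow_add] at key
  rw [pow_add] at hs
  linear_combination (-(-1) ^ i * (-1) ^ e) * key -
    (P v (a + 1) (i + 1) (j + 1) * P v a (i + 1) (j + 1) -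
      P v a (i + 2) (j + 1) * P v (a + 1) i (j + 1) -
      P v a (i + 1) (j + 2) * P v (a + 1) (i + 1) j) * hs

lemma P_zero_left (v : ℕ → Fin (n + 1) → F) (a j : ℕ) : P v a 0 j = P v (a + j) 0 0 := by
  refine D_congr fun r _ => ?_
  split_ifs <;> first | rfl | omega | (congr 1; omega)

lemma P_top (v : ℕ → Fin (n + 1) → F) (a j : ℕ) : P v a (n + 1) j = P v a 0 0 := by
  refine D_congr fun r _ => ?_
  split_ifs <;> first | rfl | omega

lemma P_zero_right (v : ℕ → Fin (n + 1) → F) (a i : ℕ) : P v a i 0 = P v a 0 0 := by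
  refine D_congr fun r _ => ?_
  split_ifs <;> rfl

/-! ### A sequence of vectors with prescribed determinants -/

/-- For a sequence of vectors solving the recurrence
`v_{a+n+1} = ∑ l ≤ n, (-1) ^ (n-l) * c a l • v_{a+l}` with `v_0, …, v_n` the standard basis,
`window n c a r` is `v_{a+r}`, for `r ≤ n`. Each step shifts the window by one and appends the
vector given by the recurrence. -/
noncomputable def window (n : ℕ) (c : ℕ → ℕ → F) : ℕ → ℕ → Fin (n + 1) → F
  | 0 => fun r s => if r = s then 1 else 0
  | a + 1 => fun r => if r < n then window n c a (r + 1) else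
      ∑ l ∈ Finset.range (n + 1), ((-1) ^ (n - l) * c a l) • window n c a l

lemma window_eq (c : ℕ → ℕ → F) (r a : ℕ) (hr : r ≤ n) :
    window n c a r = window n c (a + r) 0 := by
  induction r generalizing a with
  | zero => rfl
  | succ r ih =>
    rw [show a + (r + 1) = a + 1 + r by omega, ← ih _ (by omega)]
    simp only [window]
    rw [if_pos (by omega)]

lemma exists_vectors (n : ℕ) (c : ℕ → ℕ → F) : ∃ v : ℕ → Fin (n + 1) → F,
    P v 0 0 0 = 1 ∧
    ∀ a, v (a + n + 1) = ∑ l ∈ Finset.range (n + 1), ((-1) ^ (n - l) * c a l) • v (a + l) := by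
  refine ⟨fun a => window n c a 0, ?_, fun a => ?_⟩
  · have h : P (fun a => window n c a 0) 0 0 0 = D (window n c 0) := by
      refine D_congr fun r hr => ?_
      rw [window_eq c r 0 hr]
      simp
    rw [h]
    unfold D
    refine Eq.trans ?_ (Matrix.det_one (n := Fin (n + 1)) (R := F))
    change Matrix.detRowAlternating _ = Matrix.detRowAlternating _
    congr 1
    funext r s
    simp [window, Matrix.one_apply, Fin.ext_iff]
  · have h := window_eq c n (a + 1) le_rfl
    rw [show a + n + 1 = a + 1 + n by omega]
    refine h.symm.trans ?_
    simp only [window, lt_irrefl, if_false]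
    refine Finset.sum_congr rfl fun l hl => ?_
    rw [window_eq c l a (by simp at hl; omega)]

/-- The coefficients of the linear recurrence are the determinants with a gap of length one:
substituting the recurrence for the last row of `P v a i 1`, only the vector `v_{a+i}`, which is
missing from the other rows, contributes. -/
lemma P_one (v : ℕ → Fin (n + 1) → F) (c : ℕ → ℕ → F)
    (hv : ∀ a, v (a + n + 1) = ∑ l ∈ Finset.range (n + 1), ((-1) ^ (n - l) * c a l) • v (a + l))
    (a i : ℕ) (hi : i ≤ n) : P v a i 1 = c a i * P v a 0 0 := by
  set f : ℕ → Fin (n + 1) → F := fun r => v (if r < i then a + r else a + r + 1) with hf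
  have h1 : P v a i 1 = D (Function.update f n (v (a + n + 1))) := by
    refine D_congr fun r _ => ?_
    simp only [hf, Function.update_apply]
    split_ifs <;> first | rfl | omega | (congr 1; omega)
  rw [h1, hv, D_update_sum f le_rfl, Finset.sum_eq_single_of_mem i (by simp; omega)]
  · have h2 : D (Function.update f n (v (a + i))) = (-1) ^ (n - i) * P v a 0 0 := by
      refine Eq.trans (D_congr fun r _ => ?_) (D_rot i (n - i) _ (by omega))
      simp only [hf, Function.update_apply]
      split_ifs <;> first | rfl | omega
    have hs : ((-1 : F) ^ (n - i)) * (-1) ^ (n - i) = 1 := by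
      rw [← mul_pow]; simp
    rw [h2]
    linear_combination (c a i * P v a 0 0) * hs
  · intro l hl hne
    rw [Finset.mem_range] at hl
    rw [D_eq_zero (p := if l < i then l else l - 1) (q := n), mul_zero]
    · split_ifs <;> omega
    · exact le_rfl
    · split_ifs <;> omega
    · simp only [hf, Function.update_apply]
      split_ifs <;> first | rfl | omega | (congr 1; omega)

/-! ### Periodicity -/

/-- In the expansion `v_{a+n+m+2} = ∑ l ≤ n, c l • v_{a+l}`, the equation `P v a i (m+2) = 0`
shows `c i = 0` once `c l = 0` is known for all `l > i`, because it reads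
`± c i * P v a (i+1) (m+1) = 0`. Hence `v_{a+n+m+2}` is a multiple of `v_a`, and
`P v (a+1) n (m+1) = 1` determines the factor. -/
lemma antiperiodic (v : ℕ → Fin (n + 1) → F) (m : ℕ) (hdet : ∀ a, P v a 0 0 = 1)
    (h1 : ∀ a i, i ≤ n + 1 → P v a i (m + 1) = 1)
    (h2 : ∀ a i, 1 ≤ i → i ≤ n → P v a i (m + 2) = 0) (a : ℕ) :
    v (a + n + m + 2) = (-1 : F) ^ n • v a := by
  obtain ⟨c, hc⟩ : ∃ c : ℕ → F,
      v (a + n + m + 2) = ∑ l ∈ Finset.range (n + 1), c l • v (a + l) := by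
    have h := cramer (fun r => v (a + r)) (v (a + n + m + 2))
    have h' : D (fun r => v (a + r)) = 1 := by
      rw [← hdet a]
      refine D_congr fun r _ => ?_
      simp
    rw [h', one_smul] at h
    exact ⟨_, h⟩
  -- Downward induction on `i`, expressed through `d = n - i`.
  have hz : ∀ d i, i + d = n → 1 ≤ i → c i = 0 := by
    intro d
    induction d using Nat.strong_induction_on with
    | _ d ih =>
      intro i hid hi
      have h := h2 a i hi (by omega)
      set f : ℕ → Fin (n + 1) → F := fun r => v (if r < i then a + r else a + r + (m + 2)) with hf
      have h3 : P v a i (m + 2) = D (Function.update f n (v (a + n + m + 2))) := by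
        refine D_congr fun r _ => ?_
        simp only [hf, Function.update_apply]
        split_ifs <;> first | rfl | omega | (congr 1; omega)
      rw [h3, hc, D_update_sum f le_rfl, Finset.sum_eq_single_of_mem i (by simp; omega)] at h
      · have h4 : D (Function.update f n (v (a + i))) = (-1) ^ (n - i) * P v a (i + 1) (m + 1) := by
          refine Eq.trans (D_congr fun r _ => ?_) (D_rot i (n - i) _ (by omega))
          simp only [hf, Function.update_apply]
          split_ifs <;> first | rfl | omega | (congr 1; omega)
        rw [h4, h1 _ _ (by omega), mul_one] at h
        simpa using h
      · intro l hl hne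
        rw [Finset.mem_range] at hl
        rcases lt_or_gt_of_ne hne with hlt | hgt
        · rw [D_eq_zero (p := l) (q := n) (by omega) le_rfl (by omega), mul_zero]
          simp only [hf, Function.update_apply]
          split_ifs <;> rfl
        · rw [ih (n - l) (by omega) l (by omega) (by omega), zero_mul]
  have hc0 : v (a + n + m + 2) = c 0 • v a := by
    rw [hc, Finset.sum_eq_single_of_mem 0 (by simp)]
    · rfl
    · intro l hl hne
      rw [Finset.mem_range] at hl
      rw [hz (n - l) l (by omega) (by omega), zero_smul]
  have h5 : (1 : F) = c 0 * (-1) ^ n := by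
    refine (h1 (a + 1) n (by omega)).symm.trans ?_
    have h6 : P v (a + 1) n (m + 1) =
        D (Function.update (fun r => v (a + 1 + r)) n (∑ l ∈ {0}, c l • v a)) := by
      rw [Finset.sum_singleton, ← hc0]
      refine D_congr fun r _ => ?_
      simp only [Function.update_apply]
      split_ifs <;> first | rfl | omega | (congr 1; omega)
    rw [h6, D_update_sum _ le_rfl, Finset.sum_singleton]
    congr 1
    refine Eq.trans (D_congr (g := _) fun r _ => ?_)
      ((D_rot 0 n (fun r => v (a + r)) (by omega)).trans ?_)
    · simp only [Function.update_apply]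
      split_ifs <;> first | rfl | omega | (congr 1; omega)
    · have h' : D (fun r => v (a + r)) = 1 := by
        rw [← hdet a]
        refine D_congr fun r _ => ?_
        simp
      rw [h', mul_one]
  have hs : ((-1 : F) ^ n) * (-1) ^ n = 1 := by
    rw [← mul_pow]; simp
  rw [hc0]
  congr 1
  linear_combination (-c 0) * hs - (-1) ^ n * h5

/-- A nowhere vanishing solution of the octahedron recurrence on the strip `0 ≤ i ≤ n + 1`,
`0 ≤ j ≤ m + 1` with value `1` on the border has period `n + m + 2` in the first variable. -/
theorem octahedron_periodic (m : ℕ) (S : ℕ → ℕ → ℕ → F)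
    (hi0 : ∀ a j, S a 0 j = 1) (hi1 : ∀ a j, S a (n + 1) j = 1)
    (hj0 : ∀ a i, S a i 0 = 1) (hj1 : ∀ a i, S a i (m + 1) = 1)
    (hne : ∀ a i j, S a i j ≠ 0)
    (hoct : ∀ a i j, i + 1 ≤ n → j + 1 ≤ m →
      S (a + 1) (i + 1) (j + 1) * S a (i + 1) (j + 1) =
        S a (i + 2) (j + 1) * S (a + 1) i (j + 1) + S a (i + 1) (j + 2) * S (a + 1) (i + 1) j)
    (i j : ℕ) (hi : i ≤ n + 1) (hj : j ≤ m + 1) : S (n + m + 2) i j = S 0 i j := by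
  obtain ⟨v, hv0, hv⟩ := exists_vectors n (fun a l => S a l 1)
  have hdet : ∀ a, P v a 0 0 = 1 := by
    intro a
    induction a with
    | zero => exact hv0
    | succ a ih =>
      have h := P_one v _ hv a 0 (by omega)
      rwa [P_zero_left, ih, hi0, mul_one] at h
  have hP0 : ∀ a j, P v a 0 j = 1 := fun a j => by rw [P_zero_left, hdet]
  have hP1 : ∀ a j, P v a (n + 1) j = 1 := fun a j => by rw [P_top, hdet]
  have hSP : ∀ j, (j ≤ m + 1 → ∀ a i, i ≤ n + 1 → S a i j = P v a i j) ∧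
      (j ≤ m → ∀ a i, i ≤ n + 1 → S a i (j + 1) = P v a i (j + 1)) := by
    intro j
    induction j with
    | zero =>
      refine ⟨fun _ a i _ => by rw [hj0, P_zero_right, hdet], fun _ a i hi => ?_⟩
      rcases Nat.lt_or_ge i (n + 1) with h | h
      · rw [P_one v _ hv a i (by omega), hdet, mul_one]
      · obtain rfl : i = n + 1 := by omega
        rw [hi1, hP1]
    | succ j ih =>
      refine ⟨fun h => ih.2 (by omega), fun h a i hi => ?_⟩
      rcases Nat.eq_zero_or_pos i with rfl | hpos
      · rw [hi0, hP0]
      obtain ⟨i, rfl⟩ : ∃ e, i = e + 1 := ⟨i - 1, by omega⟩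
      rcases Nat.lt_or_ge i n with h' | h'
      · have e1 := hoct a i j h' h
        have e2 := P_octahedron v a i j h'
        have g1 := ih.1 (by omega)
        have g2 := ih.2 (by omega)
        rw [← g2 _ _ (by omega), ← g2 _ _ (by omega), ← g2 _ _ (by omega), ← g2 _ _ (by omega),
          ← g1 _ _ (by omega), e1] at e2
        exact mul_right_cancel₀ (hne (a + 1) (i + 1) j) (add_left_cancel e2)
      · obtain rfl : i = n := by omega
        rw [hi1, hP1]
  -- The next layer `j = m + 2`, where only the determinants, not `S`, are under control.
  have hlast : ∀ a i, i ≤ n + 1 → P v a i (m + 1) = 1 := fun a i hi => by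
    rw [← (hSP (m + 1)).1 le_rfl a i hi, hj1]
  have hnext : ∀ a i, 1 ≤ i → i ≤ n → P v a i (m + 2) = 0 := by
    intro a i h1 h2
    obtain ⟨i, rfl⟩ : ∃ e, i = e + 1 := ⟨i - 1, by omega⟩
    have e2 := P_octahedron v a i m h2
    rw [hlast _ _ (by omega), hlast _ _ (by omega), hlast _ _ (by omega), hlast _ _ (by omega),
      ← (hSP m).1 (by omega) _ _ (by omega)] at e2
    have e3 : P v a (i + 1) (m + 2) * S (a + 1) (i + 1) m = 0 := by linear_combination -e2
    exact (mul_eq_zero.1 e3).resolve_right (hne _ _ _)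
  have hanti := antiperiodic v m hdet hlast hnext
  rw [(hSP j).1 hj _ _ hi, (hSP j).1 hj _ _ hi]
  have h1 : P v (n + m + 2) i j =
      D (fun r => (-1 : F) ^ n • v (if r < i then 0 + r else 0 + r + j)) := by
    refine D_congr fun r _ => ?_
    rw [← hanti]
    split_ifs <;> first | rfl | omega | (congr 1; omega)
  have h2 := AlternatingMap.map_smul_univ (Matrix.detRowAlternating (R := F) (n := Fin (n + 1)))
    (fun _ => (-1 : F) ^ n) (fun r => v (if (r : ℕ) < i then 0 + r else 0 + r + j))
  rw [h1]
  refine h2.trans ?_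
  rw [Finset.prod_const, Finset.card_univ, Fintype.card_fin, ← pow_mul,
    Even.neg_one_pow (Nat.even_mul_succ_self n), one_smul]
  rfl

/-! ### Nonvanishing of the `T`-system -/

/-- The quotients of two polynomials that are positive at the point all of whose coordinates
are `1`. This set contains the variables, is closed under sums, products and quotients, and does
not contain `0`. -/
def IsPos {V : Type} (x : FractionRing (MvPolynomial V ℚ)) : Prop :=
  ∃ p q : MvPolynomial V ℚ, 0 < MvPolynomial.eval (fun _ => 1) p ∧
    0 < MvPolynomial.eval (fun _ => 1) q ∧
    x * algebraMap _ (FractionRing (MvPolynomial V ℚ)) q = algebraMap _ _ p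

section Positivity
variable {V : Type} {x y : FractionRing (MvPolynomial V ℚ)}

lemma algebraMap_ne_zero {p : MvPolynomial V ℚ}
    (hp : 0 < MvPolynomial.eval (fun _ => 1) p) :
    algebraMap _ (FractionRing (MvPolynomial V ℚ)) p ≠ 0 := by
  rw [Ne, FaithfulSMul.algebraMap_eq_zero_iff]
  rintro rfl
  simp at hp

lemma IsPos.ne_zero (hx : IsPos x) : x ≠ 0 := by
  rintro rfl
  obtain ⟨p, q, hp, hq, h⟩ := hx
  exact algebraMap_ne_zero hp (by rw [← h, zero_mul])

lemma IsPos.one : IsPos (1 : FractionRing (MvPolynomial V ℚ)) :=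
  ⟨1, 1, by simp, by simp, by simp⟩

lemma IsPos.add (hx : IsPos x) (hy : IsPos y) : IsPos (x + y) := by
  obtain ⟨p, q, hp, hq, h⟩ := hx
  obtain ⟨p', q', hp', hq', h'⟩ := hy
  refine ⟨p * q' + p' * q, q * q', ?_, ?_, ?_⟩
  · rw [map_add, map_mul, map_mul]; positivity
  · rw [map_mul]; positivity
  · rw [map_add, map_mul, map_mul, map_mul, ← h, ← h']; ring

lemma IsPos.mul (hx : IsPos x) (hy : IsPos y) : IsPos (x * y) := by
  obtain ⟨p, q, hp, hq, h⟩ := hx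
  obtain ⟨p', q', hp', hq', h'⟩ := hy
  refine ⟨p * p', q * q', ?_, ?_, ?_⟩
  · rw [map_mul]; positivity
  · rw [map_mul]; positivity
  · rw [map_mul, map_mul, ← h, ← h']; ring

lemma IsPos.of_mul (hxy : IsPos (x * y)) (hy : IsPos y) : IsPos x := by
  obtain ⟨p, q, hp, hq, h⟩ := hxy
  obtain ⟨p', q', hp', hq', h'⟩ := hy
  refine ⟨p * q', q * p', ?_, ?_, ?_⟩
  · rw [map_mul]; positivity
  · rw [map_mul]; positivity
  · rw [map_mul, map_mul, ← h, ← h']; ring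

lemma IsPos.pow (hx : IsPos x) (k : ℕ) : IsPos (x ^ k) := by
  induction k with
  | zero => simpa using IsPos.one
  | succ k ih => rw [pow_succ]; exact ih.mul hx

/-- The recurrence is subtraction-free and can be run in both directions of time, so `IsPos`
propagates from the initial values at times `0` and `1`. -/
theorem isPos_of_isTSystem [Fintype V] {eps : V → ℤ} {A B : V → V → ℕ}
    {T : ℤ → V → FractionRing (MvPolynomial V ℚ)} (hT : IsTSystem eps A B T)
    (heps : ∀ v, eps v = 0 ∨ eps v = 1)
    (hA : ∀ v u, A v u ≠ 0 → Odd (eps v + eps u))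
    (hB : ∀ v u, B v u ≠ 0 → Odd (eps v + eps u))
    (t : ℤ) (v : V) (ht : Even (t + eps v)) : IsPos (T t v) := by
  have hprod : ∀ C : V → V → ℕ, (∀ v u, C v u ≠ 0 → Odd (eps v + eps u)) →
      ∀ t : ℤ, (∀ v, Even (t + eps v) → IsPos (T t v)) → ∀ v, Odd (t + eps v) →
      IsPos (∏ u, T t u ^ C v u) := by
    intro C hC t h v hv
    refine Finset.prod_induction _ IsPos (fun _ _ => IsPos.mul) IsPos.one fun u _ => ?_
    by_cases h0 : C v u = 0
    · rw [h0, pow_zero]; exact IsPos.one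
    · refine (h u ?_).pow _
      have := hC v u h0
      grind
  have hrhs : ∀ t : ℤ, (∀ v, Even (t + eps v) → IsPos (T t v)) → ∀ v, Odd (t + eps v) →
      IsPos (T (t + 1) v * T (t - 1) v) := by
    intro t h v hv
    rw [hT.2 t v hv]
    exact (hprod A hA t h v hv).add (hprod B hB t h v hv)
  have hinit : ∀ v, IsPos (T (eps v) v) := by
    intro v
    rw [hT.1]
    exact ⟨MvPolynomial.X v, 1, by simp, by simp, by simp⟩
  have main : ∀ t : ℤ, (∀ v, Even (t + eps v) → IsPos (T t v)) ∧
      (∀ v, Even (t + 1 + eps v) → IsPos (T (t + 1) v)) := by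
    intro t
    induction t using Int.induction_on with
    | zero =>
      refine ⟨fun v hv => ?_, fun v hv => ?_⟩
      · have h := hinit v
        rcases heps v with h' | h' <;> rw [h'] at h hv
        · exact h
        · exact absurd hv (by decide)
      · have h := hinit v
        rcases heps v with h' | h' <;> rw [h'] at h hv
        · exact absurd hv (by decide)
        · exact h
    | succ t ih =>
      refine ⟨ih.2, fun v hv => ?_⟩
      have h := hrhs (t + 1) ih.2 v (by grind)
      rw [add_sub_cancel_right] at h
      exact h.of_mul (ih.1 v (by grind))
    | pred t ih =>
      refine ⟨fun v hv => ?_, by rw [sub_add_cancel]; exact ih.1⟩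
      have h := hrhs (-t) ih.1 v (by grind)
      rw [mul_comm] at h
      exact h.of_mul (ih.2 v (by grind))
  exact (main t).1 v ht

end Positivity

/-! ### From the `T`-system to the octahedron recurrence -/

/-- The product over the neighbours of a vertex in the path with `n` vertices, the vertices being
placed at `1, …, n` and the function `g` having value `1` at both ends `0` and `n + 1`. -/
lemma prod_neighbours {R : Type*} [CommMonoid R] {n : ℕ} (g : ℕ → R) (h0 : g 0 = 1)
    (h1 : g (n + 1) = 1) (i : Fin n) :
    ∏ u : Fin n, g (u + 1) ^ (if (i : ℕ) + 1 = u ∨ (u : ℕ) + 1 = i then 1 else 0) =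
      g (i + 2) * g i := by
  have e : ∀ u : Fin n, g (u + 1) ^ (if (i : ℕ) + 1 = u ∨ (u : ℕ) + 1 = i then 1 else 0) =
      (if (i : ℕ) + 1 = u then g (u + 1) else 1) * (if (u : ℕ) + 1 = i then g (u + 1) else 1) := by
    intro u
    split_ifs <;> first | omega | simp
  rw [Finset.prod_congr rfl fun u _ => e u, Finset.prod_mul_distrib]
  congr 1
  · rw [Finset.prod_ite, Finset.prod_const_one, mul_one]
    by_cases h : (i : ℕ) + 1 < n
    · rw [Finset.prod_eq_single_of_mem (⟨i + 1, h⟩ : Fin n) (by simp)]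
      intro u hu hne
      simp [Fin.ext_iff] at hu hne
      omega
    · rw [show (i : ℕ) + 2 = n + 1 by omega, h1]
      refine Finset.prod_eq_one fun u hu => ?_
      simp at hu
      omega
  · rw [Finset.prod_ite, Finset.prod_const_one, mul_one]
    by_cases h : (i : ℕ) = 0
    · rw [h, h0]
      refine Finset.prod_eq_one fun u hu => ?_
      simp at hu
    · rw [Finset.prod_eq_single_of_mem (⟨i - 1, by omega⟩ : Fin n) (by simp; omega)]
      · congr 1
        simp; omega
      · intro u hu hne
        simp [Fin.ext_iff] at hu hne
        omega

/-- The family `T` with vertices renumbered from `1`, so that vertex `(i, j)` of `Fin n × Fin m` sits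
at `(i + 1, j + 1)`, and extended by `1` to all other pairs of natural numbers. -/
noncomputable def extend {n m : ℕ} {R : Type*} [One R] (T : ℤ → Fin n × Fin m → R)
    (t : ℤ) (i j : ℕ) : R :=
  if h : (1 ≤ i ∧ i ≤ n) ∧ (1 ≤ j ∧ j ≤ m) then
    T t (⟨i - 1, by omega⟩, ⟨j - 1, by omega⟩) else 1

lemma extend_succ {n m : ℕ} {R : Type*} [One R] (T : ℤ → Fin n × Fin m → R)
    (t : ℤ) (i : Fin n) (j : Fin m) : extend T t (i + 1) (j + 1) = T t (i, j) := by
  unfold extend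
  rw [dif_pos (by omega)]
  rfl

lemma prod_tensorA {n m : ℕ} {R : Type*} [CommMonoid R] (T : ℤ → Fin n × Fin m → R)
    (t : ℤ) (i : Fin n) (j : Fin m) : ∏ u, T t u ^ tensorA n m (i, j) u =
      extend T t (i + 2) (j + 1) * extend T t i (j + 1) := by
  rw [← prod_neighbours (fun i => extend T t i (j + 1)) (by simp [extend]) (by simp [extend]) i,
    Fintype.prod_prod_type]
  refine Finset.prod_congr rfl fun u _ => ?_
  rw [Finset.prod_eq_single_of_mem j (Finset.mem_univ _)]
  · simp [tensorA, extend_succ]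
  · intro w _ hw
    simp [tensorA, hw.symm]

lemma prod_tensorB {n m : ℕ} {R : Type*} [CommMonoid R] (T : ℤ → Fin n × Fin m → R)
    (t : ℤ) (i : Fin n) (j : Fin m) : ∏ u, T t u ^ tensorB n m (i, j) u =
      extend T t (i + 1) (j + 2) * extend T t (i + 1) j := by
  rw [← prod_neighbours (fun j => extend T t (i + 1) j) (by simp [extend]) (by simp [extend]) j,
    Fintype.prod_prod_type, Finset.prod_comm]
  refine Finset.prod_congr rfl fun u _ => ?_
  rw [Finset.prod_eq_single_of_mem i (Finset.mem_univ _)]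
  · simp [tensorB, extend_succ]
  · intro w _ hw
    simp [tensorB, hw.symm]

end TensorAA

/-- the `T`-system of the tensor product `A_n ⊗ A_m` is periodic with period
`2(n + m + 2)`. -/
theorem tensorAA_tsystem_periodicity
    (n m : ℕ) (hn : 1 ≤ n) (hm : 1 ≤ m)
    (T : ℤ → Fin n × Fin m → FractionRing (MvPolynomial (Fin n × Fin m) ℚ))
    (hT : IsTSystem (tensorEps n m) (tensorA n m) (tensorB n m) T) :
    ∀ (v : Fin n × Fin m) (t : ℤ), Even (t + tensorEps n m v) →
      T (t + 2 * ((n : ℤ) + m + 2)) v = T t v := by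
  rintro ⟨i₀, j₀⟩ t₁ ht₁
  have heps : ∀ v, tensorEps n m v = 0 ∨ tensorEps n m v = 1 := fun v => by
    unfold tensorEps; omega
  have hA : ∀ v u, tensorA n m v u ≠ 0 → Odd (tensorEps n m v + tensorEps n m u) := by
    intro v u h
    have h' : v.2 = u.2 ∧ ((v.1 : ℕ) + 1 = u.1 ∨ (u.1 : ℕ) + 1 = v.1) := by
      by_contra hc
      exact h (if_neg hc)
    rw [Int.odd_iff]
    have := congrArg Fin.val h'.1
    unfold tensorEps
    omega
  have hB : ∀ v u, tensorB n m v u ≠ 0 → Odd (tensorEps n m v + tensorEps n m u) := by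
    intro v u h
    have h' : v.1 = u.1 ∧ ((v.2 : ℕ) + 1 = u.2 ∨ (u.2 : ℕ) + 1 = v.2) := by
      by_contra hc
      exact h (if_neg hc)
    rw [Int.odd_iff]
    have := congrArg Fin.val h'.1
    unfold tensorEps
    omega
  -- With this base time, the vertex `(i₀, j₀)` at time `t₁` is the point `a = 0` of `S`.
  obtain ⟨t₀, ht₀, hev⟩ : ∃ t₀ : ℤ, t₁ = t₀ + ((i₀ + 1 : ℕ) + (j₀ + 1 : ℕ)) ∧ t₀ % 2 = 0 := by
    refine ⟨t₁ - ((i₀ + 1 : ℕ) + (j₀ + 1 : ℕ)), by ring, ?_⟩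
    rw [Int.even_iff] at ht₁
    simp only [tensorEps] at ht₁
    push_cast
    omega
  have key := TensorAA.octahedron_periodic (n := n) m
    (fun a i j => TensorAA.extend T (t₀ + 2 * a + (i + j)) i j)
    (fun a j => by simp [TensorAA.extend]) (fun a j => by simp [TensorAA.extend])
    (fun a i => by simp [TensorAA.extend]) (fun a i => by simp [TensorAA.extend])
    (fun a i j => by
      unfold TensorAA.extend
      split_ifs with h
      · refine (TensorAA.isPos_of_isTSystem hT heps hA hB _ _ ?_).ne_zero
        rw [Int.even_iff]
        simp only [tensorEps]
        omega
      · exact one_ne_zero)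
    (fun a i j hi hj => by
      have h := hT.2 (t₀ + 2 * a + (i + j) + 3) (⟨i, hi⟩, ⟨j, hj⟩) (by
        rw [Int.odd_iff]
        simp only [tensorEps]
        omega)
      rw [TensorAA.prod_tensorA, TensorAA.prod_tensorB,
        ← TensorAA.extend_succ T (_ + 1) ⟨i, hi⟩ ⟨j, hj⟩,
        ← TensorAA.extend_succ T (_ - 1) ⟨i, hi⟩ ⟨j, hj⟩] at h
      simp only at h
      convert h using 3 <;> push_cast <;> ring_nf)
    (i₀ + 1) (j₀ + 1) (by omega) (by omega)
  simp only [TensorAA.extend_succ] at key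
  rw [ht₀]
  convert key using 2 <;> push_cast <;> ring
end

section
/- Let Λ be an ADE Dynkin diagram with vertex set W, a bipartition ε_Λ : W → {0,1}, and Coxeter number h. Define the twist bigraph Λ × Λ on the vertex set V = W × {1,2} with bipartition ε(w,i) = ε_Λ(w), where A((u,i),(v,i')) = 1 if i = i' and {u,v} is an edge of Λ (and 0 otherwise), and B((u,i),(v,i')) = 1 if i ≠ i' and {u,v} is an edge of Λ (and 0 otherwise). Then the T-system associated with this bipartite recurrent quiver satisfies T(t + 4h, v) = T(t, v), and for every λ : V → ℝ the tropical T-system satisfies f^λ(t + 4h, v) = f^λ(t, v), for all v ∈ V and t ∈ ℤ with t + ε(v) even. -/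
/-!
The recurrence for `T(t, (v, 1))` and for `T(t, (v, 2))` has the same right-hand side. Taking
logarithms, both the `T`-system and its tropical version become
`f₁(t+1) + f₁(t-1) = f₂(t+1) + f₂(t-1) = F(a, b)`, where `a` and `b` are the sums of `f₁` and
`f₂` over the neighbours and `F` is `log (exp a + exp b)` or `max a b`; in both cases
`2 F(a, b) = a + b + G(a - b)` with `G` even.

The difference `d = f₁ - f₂` satisfies `d(t+2) = -d(t)`, so it has period `4` and
`G(a - b)` has period `2`. The sum `p = f₁ + f₂` therefore solves the linear wave equation
`p(t+1) + p(t-1) = M p(t) + s(t)` on `Λ`, with `M` the adjacency matrix and `s` of period `2`.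

For the free wave equation, the shift `S` satisfies `S + S⁻¹ = M`, so
`S^h - S^{-h} = (S - S⁻¹) S_{h-1}(M)` with `S_{h-1}` a rescaled Chebyshev polynomial of the second
kind. At the Coxeter number `S_{h-1}(M) = 0` (`chebS_coxeter`): in types `A` and `D` the
Chebyshev sequence started at the end of an arm is explicit, and in type `E` it is computed. So
free solutions have period `2h`. The forcing does not spoil this: `p(t+2h) - p(t)` is a free
solution of period `2`, on which `S_{h-1}(M) = h S^{h-1}`, so it vanishes
(`forced_wave_periodic`). Hence `p` has period `2h`, `d` has period `4`, and both `f₁` and `f₂`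
have period `4h` (`twist_real`).

Logarithms are available because the field of rational functions embeds in `ℝ` with the
variables sent to algebraically independent positive numbers (`exists_positive_embedding`), and the
recurrence is free of subtractions (`tsystem_pos`).
-/

open scoped BigOperators

/-- The Dynkin diagram `A_n`: vertices `0, …, n-1` with edges `{i, i+1}`. -/
def adeA (n : ℕ) : SimpleGraph (Fin n) :=
  SimpleGraph.fromRel (fun i j => (i : ℕ) + 1 = (j : ℕ))

/-- The Dynkin diagram `D_n` (`n ≥ 4`): a path on vertices `0, …, n-2`
together with the edge `{n-3, n-1}`. -/
def adeD (n : ℕ) : SimpleGraph (Fin n) :=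
  SimpleGraph.fromRel (fun i j =>
    ((i : ℕ) + 1 = (j : ℕ) ∧ (j : ℕ) ≤ n - 2) ∨ ((i : ℕ) = n - 3 ∧ (j : ℕ) = n - 1))

/-- The Dynkin diagram `E_n` (`n = 6, 7, 8`): a path on vertices `0, …, n-2`
together with the edge `{2, n-1}`. -/
def adeE (n : ℕ) : SimpleGraph (Fin n) :=
  SimpleGraph.fromRel (fun i j =>
    ((i : ℕ) + 1 = (j : ℕ) ∧ (j : ℕ) ≤ n - 2) ∨ ((i : ℕ) = 2 ∧ (j : ℕ) = n - 1))

/-- A graph is an ADE Dynkin diagram if it is isomorphic to some `A_n` (`n ≥ 1`),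
`D_n` (`n ≥ 4`), or `E_n` (`n = 6, 7, 8`). -/
def IsADE {W : Type*} (G : SimpleGraph W) : Prop :=
  (∃ n : ℕ, 1 ≤ n ∧ Nonempty (G ≃g adeA n)) ∨
  (∃ n : ℕ, 4 ≤ n ∧ Nonempty (G ≃g adeD n)) ∨
  (∃ n : ℕ, (n = 6 ∨ n = 7 ∨ n = 8) ∧ Nonempty (G ≃g adeE n))

/-- `G` is an ADE Dynkin diagram with Coxeter number `h`:
`h(A_n) = n+1`, `h(D_n) = 2n-2`, `h(E_6) = 12`, `h(E_7) = 18`, `h(E_8) = 30`. -/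
def HasCoxeterNumber {W : Type*} (G : SimpleGraph W) (h : ℕ) : Prop :=
  (∃ n : ℕ, 1 ≤ n ∧ h = n + 1 ∧ Nonempty (G ≃g adeA n)) ∨
  (∃ n : ℕ, 4 ≤ n ∧ h = 2 * n - 2 ∧ Nonempty (G ≃g adeD n)) ∨
  ((h = 12 ∧ Nonempty (G ≃g adeE 6)) ∨ (h = 18 ∧ Nonempty (G ≃g adeE 7)) ∨
    (h = 30 ∧ Nonempty (G ≃g adeE 8)))

/-! ### Chebyshev polynomials of a matrix and wave equations -/

section Chebyshev

open Matrix

/-- The value at the matrix `M` of the Chebyshev polynomial `S_{k-1}`, characterised by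
`S_{k-1}(z + z⁻¹) = (z^k - z^{-k}) / (z - z⁻¹)`. -/
noncomputable def chebS {n : Type*} [Fintype n] [DecidableEq n] (M : Matrix n n ℝ) (k : ℕ) :
    Matrix n n ℝ :=
  Polynomial.aeval M (Polynomial.Chebyshev.S ℝ ((k : ℤ) - 1))

variable {n : Type*} [Fintype n] [DecidableEq n]

lemma chebS_zero (M : Matrix n n ℝ) : chebS M 0 = 0 := by
  simp [chebS]

lemma chebS_one (M : Matrix n n ℝ) : chebS M 1 = 1 := by
  simp [chebS]

lemma chebS_add_two (M : Matrix n n ℝ) (k : ℕ) :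
    chebS M (k + 2) = M * chebS M (k + 1) - chebS M k := by
  have h := Polynomial.Chebyshev.S_add_two ℝ ((k : ℤ) - 1)
  have e1 : ((k + 2 : ℕ) : ℤ) - 1 = (k : ℤ) - 1 + 2 := by push_cast; ring
  have e2 : ((k + 1 : ℕ) : ℤ) - 1 = (k : ℤ) - 1 + 1 := by push_cast; ring
  simp only [chebS, e1, e2, h, map_sub, map_mul, Polynomial.aeval_X]

lemma chebS_mul_comm (M : Matrix n n ℝ) (j k : ℕ) :
    chebS M j * chebS M k = chebS M k * chebS M j := by
  simp only [chebS, ← map_mul, mul_comm]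

/-- A vector sequence obeying the Chebyshev recurrence computes `chebS M k *ᵥ x`. -/
lemma chebS_mulVec_eq (M : Matrix n n ℝ) (x : n → ℝ) (y : ℕ → n → ℝ) (N : ℕ)
    (h0 : y 0 = 0) (h1 : y 1 = x)
    (hy : ∀ k, k + 2 ≤ N → y (k + 2) = M *ᵥ y (k + 1) - y k) :
    ∀ k, k ≤ N → chebS M k *ᵥ x = y k := by
  intro k
  induction k using Nat.twoStepInduction with
  | zero => intro _; simp [chebS_zero, h0]
  | one => intro _; simp [chebS_one, h1]
  | more k ih1 ih2 =>
    intro hk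
    rw [chebS_add_two, sub_mulVec, ← mulVec_mulVec, ih1 (by omega), ih2 (by omega), hy k hk]

/-- The kernel of `chebS M h` is stable under every `chebS M k`. -/
lemma chebS_mulVec_chebS (M : Matrix n n ℝ) (x : n → ℝ) (h k : ℕ)
    (hx : chebS M h *ᵥ x = 0) : chebS M h *ᵥ (chebS M k *ᵥ x) = 0 := by
  rw [mulVec_mulVec, chebS_mul_comm, ← mulVec_mulVec, hx, mulVec_zero]

lemma chebS_eq_zero (M : Matrix n n ℝ) (h : ℕ)
    (hx : ∀ j, chebS M h *ᵥ Pi.single j 1 = 0) : chebS M h = 0 := by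
  ext i j
  simpa using congrFun (hx j) i

lemma chebS_reindex {m : Type*} [Fintype m] [DecidableEq m] (e : n ≃ m)
    (M : Matrix n n ℝ) (k : ℕ) : chebS (M.reindex e e) k = (chebS M k).reindex e e := by
  have := Polynomial.aeval_algHom_apply (Matrix.reindexAlgEquiv ℝ ℝ e).toAlgHom M
    (Polynomial.Chebyshev.S ℝ ((k : ℤ) - 1))
  simpa [chebS] using this

/-- For a solution of the discrete wave equation `q(t+1) + q(t-1) = M q(t)` this is the
identity `S^k - S^{-k} = (S - S⁻¹) S_{k-1}(S + S⁻¹)` of shift operators. -/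
lemma wave_shift_sub (M : Matrix n n ℝ) (q : ℤ → n → ℝ)
    (hq : ∀ t, q (t + 1) + q (t - 1) = M *ᵥ q t) (k : ℕ) :
    ∀ t, q (t + k) - q (t - k) = chebS M k *ᵥ (q (t + 1) - q (t - 1)) := by
  induction k using Nat.twoStepInduction with
  | zero => intro t; simp [chebS_zero]
  | one => intro t; simp [chebS_one]
  | more k ih1 ih2 =>
    intro t
    rw [chebS_add_two, sub_mulVec, ← mulVec_mulVec, ← ih1, ← ih2, mulVec_sub, ← hq, ← hq]
    push_cast
    rw [show t + ((k : ℤ) + 1) + 1 = t + (k + 2) by ring,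
      show t + ((k : ℤ) + 1) - 1 = t + k by ring,
      show t - ((k : ℤ) + 1) + 1 = t - k by ring,
      show t - ((k : ℤ) + 1) - 1 = t - (k + 2) by ring]
    abel

lemma wave_periodic (M : Matrix n n ℝ) (h : ℕ) (hM : chebS M h = 0) (q : ℤ → n → ℝ)
    (hq : ∀ t, q (t + 1) + q (t - 1) = M *ᵥ q t) (t : ℤ) : q (t + 2 * h) = q t := by
  have := wave_shift_sub M q hq h (t + h)
  rw [hM, zero_mulVec, sub_eq_zero] at this
  rw [← add_sub_cancel_right t (h : ℤ), ← this]
  congr 1; ring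

/-- Absence of resonance: when `S² = 1` the operator `S + S⁻¹ = 2S` has
`S_{k-1}(2S) = k S^{k-1}`, so a solution of the wave equation of period `2` vanishes as soon
as some `chebS M h` with `h ≠ 0` does. -/
lemma wave_two_periodic_eq_zero (M : Matrix n n ℝ) (h : ℕ) (h0 : h ≠ 0) (hM : chebS M h = 0)
    (q : ℤ → n → ℝ) (hq : ∀ t, q (t + 1) + q (t - 1) = M *ᵥ q t)
    (hper : ∀ t, q (t + 2) = q t) (t : ℤ) : q t = 0 := by
  have key : ∀ k : ℕ, ∀ t, chebS M k *ᵥ q t = (k : ℝ) • q (t + k - 1) := by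
    intro k
    induction k using Nat.twoStepInduction with
    | zero => intro t; simp [chebS_zero]
    | one => intro t; simp [chebS_one]
    | more k ih1 ih2 =>
      intro t
      rw [chebS_add_two, sub_mulVec, ← mulVec_mulVec, ih1, ih2, mulVec_smul, ← hq]
      push_cast
      have e1 := hper (t + k - 1)
      rw [show t + ((k : ℤ) + 1) - 1 + 1 = t + k + 1 by ring,
        show t + ((k : ℤ) + 1) - 1 - 1 = t + k - 1 by ring,
        show t + ((k : ℤ) + 2) - 1 = t + k + 1 by ring, ← e1,
        show t + (k : ℤ) - 1 + 2 = t + k + 1 by ring]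
      module
  have := key h (t - h + 1)
  rw [hM, zero_mulVec, show t - (h : ℤ) + 1 + h - 1 = t by ring] at this
  exact (smul_eq_zero.1 this.symm).resolve_left (by exact_mod_cast h0)

/-- A wave equation with a forcing term `s` of period `2` still has all solutions of period
`2h`: the defect `p(t+2h) - p(t)` solves the free equation and has period `2`. -/
lemma forced_wave_periodic (M : Matrix n n ℝ) (h : ℕ) (h0 : h ≠ 0) (hM : chebS M h = 0)
    (p s : ℤ → n → ℝ) (hp : ∀ t, p (t + 1) + p (t - 1) = M *ᵥ p t + s t)
    (hs : ∀ t, s (t + 2) = s t) (t : ℤ) : p (t + 2 * h) = p t := by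
  have hs' : ∀ (k : ℕ) t, s (t + 2 * k) = s t := by
    intro k
    induction k with
    | zero => simp
    | succ k ih =>
      intro t
      rw [← ih t, ← hs (t + 2 * k)]
      congr 1; push_cast; ring
  have step : ∀ m : ℕ, ∀ t, (p (t + 1 + 2 * m) - p (t + 1)) + (p (t - 1 + 2 * m) - p (t - 1))
      = M *ᵥ (p (t + 2 * m) - p t) := by
    intro m t
    have e1 := hp (t + 2 * m)
    have e2 := hp t
    rw [hs' m t] at e1
    rw [show t + 2 * (m : ℤ) + 1 = t + 1 + 2 * m by ring,
      show t + 2 * (m : ℤ) - 1 = t - 1 + 2 * m by ring] at e1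
    rw [mulVec_sub, eq_sub_of_add_eq e1.symm, eq_sub_of_add_eq e2.symm]
    abel
  have hD := wave_periodic M h hM (fun t => p (t + 2 * (1 : ℕ)) - p t) (step 1)
  have := wave_two_periodic_eq_zero M h h0 hM (fun t => p (t + 2 * h) - p t) (step h) (by
    intro t
    have := hD t
    simp only [Nat.cast_one, mul_one] at this ⊢
    rw [show t + 2 * (h : ℤ) + 2 = t + 2 + 2 * h by ring] at this
    linear_combination this) t
  exact sub_eq_zero.1 this

end Chebyshev

/-! ### Vanishing at the Coxeter number -/

section ADE

open Matrix

open scoped Classical in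
lemma chebS_adjMatrix_iso {V W : Type*} [Fintype V] [Fintype W] [DecidableEq V] [DecidableEq W]
    {G : SimpleGraph V} {H : SimpleGraph W} (e : G ≃g H) (k : ℕ)
    (hH : chebS (H.adjMatrix ℝ) k = 0) : chebS (G.adjMatrix ℝ) k = 0 := by
  rw [← SimpleGraph.Iso.reindex_adjMatrix ℝ e.symm, chebS_reindex, hH]
  rfl

lemma adjMatrix_mulVec_eq {V : Type*} [Fintype V] (G : SimpleGraph V) [DecidableRel G.Adj]
    (x : V → ℝ) (v : V) :
    (G.adjMatrix ℝ *ᵥ x) v = ∑ u, if G.Adj v u then x u else 0 := by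
  simp [mulVec, dotProduct, SimpleGraph.adjMatrix_apply]

/-- The basis vector of the `k`-th vertex of `Fin n`, with vertices counted from `1`; it is `0`
for `k = 0` and for `k > n`. -/
def vert (n k : ℕ) : Fin n → ℝ := fun i => if (i : ℕ) + 1 = k then 1 else 0

lemma vert_zero (n : ℕ) : vert n 0 = 0 := by
  ext i; simp [vert]

lemma single_eq_vert (n : ℕ) (j : Fin n) : Pi.single j 1 = vert n (j + 1) := by
  ext i; simp [vert, Pi.single_apply, Fin.ext_iff]

open scoped Classical in
lemma adjMatrix_mulVec_vert (n : ℕ) (G : SimpleGraph (Fin n)) (k : ℕ) (hk : k < n) (i : Fin n) :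
    (G.adjMatrix ℝ *ᵥ vert n (k + 1)) i = if G.Adj i ⟨k, hk⟩ then 1 else 0 := by
  rw [← single_eq_vert n ⟨k, hk⟩, mulVec_single_one]
  simp [Matrix.col, SimpleGraph.adjMatrix_apply]

open scoped Classical in
/-- The Chebyshev sequence started at an end of the path walks along the path and
leaves it after `n` steps. -/
lemma chebS_adeA (n : ℕ) : chebS ((adeA n).adjMatrix ℝ) (n + 1) = 0 := by
  have hM : ∀ k, k + 2 ≤ n + 1 →
      vert n (k + 2) = (adeA n).adjMatrix ℝ *ᵥ vert n (k + 1) - vert n k := by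
    intro k hk
    ext i
    rw [Pi.sub_apply, adjMatrix_mulVec_vert n _ k (by omega)]
    simp only [adeA, SimpleGraph.fromRel_adj, vert, ne_eq, Fin.ext_iff]
    split_ifs <;> first | omega | norm_num
  have hy := chebS_mulVec_eq ((adeA n).adjMatrix ℝ) (vert n 1) (vert n) (n + 1) (vert_zero n)
    rfl hM
  have h1 : chebS ((adeA n).adjMatrix ℝ) (n + 1) *ᵥ vert n 1 = 0 := by
    rw [hy _ le_rfl]
    ext i
    have := i.2
    simp only [vert, Pi.zero_apply, ite_eq_right_iff]
    omega
  refine chebS_eq_zero _ _ fun j => ?_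
  rw [single_eq_vert, ← hy (j + 1) (by omega)]
  exact chebS_mulVec_chebS _ _ _ _ h1

open scoped Classical in
/-- The Chebyshev sequence started at the end of the long arm of `D_n` walks along the arm,
hits the sum of the two short leaves at time `n - 1`, and is reflected there, returning to `0`
at time `2n - 2`. The difference of the two leaves spans the kernel of the adjacency matrix. -/
lemma chebS_adeD (m : ℕ) :
    chebS ((adeD (m + 4)).adjMatrix ℝ) (2 * (m + 3)) = 0 := by
  set M := (adeD (m + 4)).adjMatrix ℝ with hMdef
  set e := vert (m + 4) with he
  have hM : ∀ k, k + 2 ≤ m + 2 → e (k + 2) = M *ᵥ e (k + 1) - e k := by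
    intro k hk
    ext i
    rw [Pi.sub_apply, hMdef, he, adjMatrix_mulVec_vert _ _ k (by omega)]
    simp only [adeD, SimpleGraph.fromRel_adj, vert, ne_eq, Fin.ext_iff]
    split_ifs <;> first | omega | norm_num
  have hM1 : M *ᵥ e (m + 2) = e (m + 1) + e (m + 3) + e (m + 4) := by
    ext i
    rw [Pi.add_apply, Pi.add_apply, hMdef, he, adjMatrix_mulVec_vert _ _ (m + 1) (by omega)]
    simp only [adeD, SimpleGraph.fromRel_adj, vert, ne_eq, Fin.ext_iff]
    split_ifs <;> first | omega | norm_num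
  have hM2 : M *ᵥ e (m + 3) = e (m + 2) := by
    ext i
    rw [hMdef, he, adjMatrix_mulVec_vert _ _ (m + 2) (by omega)]
    simp only [adeD, SimpleGraph.fromRel_adj, vert, ne_eq, Fin.ext_iff]
    split_ifs <;> first | omega | norm_num
  have hM3 : M *ᵥ e (m + 4) = e (m + 2) := by
    ext i
    rw [hMdef, he, adjMatrix_mulVec_vert _ _ (m + 3) (by omega)]
    simp only [adeD, SimpleGraph.fromRel_adj, vert, ne_eq, Fin.ext_iff]
    split_ifs <;> first | omega | norm_num
  have hy := chebS_mulVec_eq M (e 1) e (m + 2) (vert_zero _) rfl hM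
  have hrec : ∀ k, chebS M (k + 2) *ᵥ e 1 = M *ᵥ (chebS M (k + 1) *ᵥ e 1) - chebS M k *ᵥ e 1 := by
    intro k
    rw [chebS_add_two, sub_mulVec, mulVec_mulVec]
  have hy1 : chebS M (m + 3) *ᵥ e 1 = e (m + 3) + e (m + 4) := by
    rw [hrec, hy _ le_rfl, hy _ (by omega), hM1]
    abel
  -- the sequence `y k = chebS M k *ᵥ e 1` is symmetric about `k = m + 3`
  have hrefl : ∀ j k, k + j = m + 3 →
      chebS M (m + 3 + j) *ᵥ e 1 = chebS M k *ᵥ e 1 := by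
    intro j
    induction j using Nat.twoStepInduction with
    | zero => intro k hk; rw [show k = m + 3 by omega, add_zero]
    | one =>
      intro k hk
      obtain rfl : k = m + 2 := by omega
      have h3 : chebS M (m + 3 + 1) *ᵥ e 1 =
        M *ᵥ (chebS M (m + 3) *ᵥ e 1) - chebS M (m + 2) *ᵥ e 1 := hrec (m + 2)
      rw [h3, hy1, hy _ le_rfl, mulVec_add, hM2, hM3]
      abel
    | more j ih1 ih2 =>
      intro k hk
      rw [← add_assoc, hrec, add_assoc, ih2 (k + 1) (by omega), ih1 (k + 2) (by omega), hrec]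
      abel
  have h1 : chebS M (2 * (m + 3)) *ᵥ e 1 = 0 := by
    rw [two_mul, hrefl (m + 3) 0 (by omega), chebS_zero, zero_mulVec]
  have hker : ∀ k, chebS M (2 * k) *ᵥ (e (m + 3) - e (m + 4)) = 0 ∧
      M *ᵥ (chebS M (2 * k + 1) *ᵥ (e (m + 3) - e (m + 4))) = 0 := by
    intro k
    induction k with
    | zero => simp [chebS_zero, chebS_one, mulVec_sub, hM2, hM3]
    | succ k ih =>
      have h2 : chebS M (2 * (k + 1)) *ᵥ (e (m + 3) - e (m + 4)) = 0 := by
        rw [show 2 * (k + 1) = 2 * k + 2 by ring, chebS_add_two, sub_mulVec, ← mulVec_mulVec,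
          ih.1, ih.2, sub_zero]
      refine ⟨h2, ?_⟩
      rw [show 2 * (k + 1) + 1 = (2 * k + 1) + 2 by ring, chebS_add_two, sub_mulVec,
        ← mulVec_mulVec, show 2 * k + 1 + 1 = 2 * (k + 1) by ring, h2, mulVec_zero, zero_sub,
        mulVec_neg, ih.2, neg_zero]
  have hsum : chebS M (2 * (m + 3)) *ᵥ (e (m + 3) + e (m + 4)) = 0 := by
    rw [← hy1]
    exact chebS_mulVec_chebS _ _ _ _ h1
  have hdiff := (hker (m + 3)).1
  refine chebS_eq_zero _ _ fun j => ?_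
  rw [single_eq_vert]
  have hj := j.2
  rcases (by omega : (j : ℕ) + 1 ≤ m + 2 ∨ (j : ℕ) + 1 = m + 3 ∨ (j : ℕ) + 1 = m + 4)
    with h | h | h
  · rw [← he, ← hy _ h]
    exact chebS_mulVec_chebS _ _ _ _ h1
  · rw [← he, h, show e (m + 3) = (1 / 2 : ℝ) • ((e (m + 3) + e (m + 4)) +
      (e (m + 3) - e (m + 4))) by module, mulVec_smul, mulVec_add, hsum, hdiff]
    simp
  · rw [← he, h, show e (m + 4) = (1 / 2 : ℝ) • ((e (m + 3) + e (m + 4)) -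
      (e (m + 3) - e (m + 4))) by module, mulVec_smul, mulVec_sub, hsum, hdiff]
    simp

instance adeE_decidable (n : ℕ) : DecidableRel (adeE n).Adj := fun i j =>
  decidable_of_iff' _ (SimpleGraph.fromRel_adj _ i j)

/-- Two consecutive terms of the Chebyshev sequence of `E_n` started at the vertex `j`, in
exact integer arithmetic. -/
def chebE (n : ℕ) (j : Fin n) : ℕ → (Fin n → ℤ) × (Fin n → ℤ)
  | 0 => (fun _ => 0, fun i => if i = j then 1 else 0)
  | k + 1 => ((chebE n j k).2,
      fun i => (∑ l, if (adeE n).Adj i l then (chebE n j k).2 l else 0) - (chebE n j k).1 i)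

open scoped Classical in
lemma chebS_adeE (n h : ℕ) (hc : ∀ j i, (chebE n j h).1 i = 0) :
    chebS ((adeE n).adjMatrix ℝ) h = 0 := by
  refine chebS_eq_zero _ _ fun j => ?_
  rw [chebS_mulVec_eq ((adeE n).adjMatrix ℝ) (Pi.single j 1)
    (fun k i => (((chebE n j k).1 i : ℤ) : ℝ)) h ?_ ?_ ?_ h le_rfl]
  · ext i
    simp [hc j i]
  · ext i
    simp [chebE]
  · ext i
    simp [chebE, Pi.single_apply]
  · intro k _
    ext i
    rw [Pi.sub_apply, adjMatrix_mulVec_eq]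
    simp only [chebE, Int.cast_sub, Int.cast_sum, Int.cast_ite, Int.cast_zero]

open scoped Classical in
lemma chebS_coxeter {W : Type*} [Fintype W] [DecidableEq W] (L : SimpleGraph W) (h : ℕ)
    (hL : HasCoxeterNumber L h) : h ≠ 0 ∧ chebS (L.adjMatrix ℝ) h = 0 := by
  rcases hL with ⟨n, _, rfl, ⟨e⟩⟩ | ⟨n, hn, rfl, ⟨e⟩⟩ | ⟨rfl, ⟨e⟩⟩ | ⟨rfl, ⟨e⟩⟩ | ⟨rfl, ⟨e⟩⟩
  · exact ⟨by omega, chebS_adjMatrix_iso e _ (by convert chebS_adeA n)⟩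
  · obtain ⟨m, rfl⟩ := Nat.exists_eq_add_of_le' hn
    refine ⟨by omega, chebS_adjMatrix_iso e _ ?_⟩
    rw [show 2 * (m + 4) - 2 = 2 * (m + 3) by omega]
    convert chebS_adeD m
  · exact ⟨by omega, chebS_adjMatrix_iso e _ (by convert chebS_adeE 6 12 (by decide +kernel))⟩
  · exact ⟨by omega, chebS_adjMatrix_iso e _ (by convert chebS_adeE 7 18 (by decide +kernel))⟩
  · exact ⟨by omega, chebS_adjMatrix_iso e _ (by convert chebS_adeE 8 30 (by decide +kernel))⟩

end ADE

/-! ### The twist recurrence over `ℝ` -/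

section Twist

/-- An `ℝ`-valued family satisfying an additive form of the twist recurrence in which
`G (a - b)` is the excess of twice the right-hand side over `a + b`.
In the difference of the two copies the right-hand side cancels, so it has period `4`; hence the
sum of the two copies solves a wave equation with forcing term of period `2`. -/
lemma twist_real {W : Type} [Fintype W] [DecidableEq W] (L : SimpleGraph W) [DecidableRel L.Adj]
    (h : ℕ) (hcox : HasCoxeterNumber L h) (eps : W → ℤ)
    (heps : ∀ w, eps w = 0 ∨ eps w = 1) (hbip : ∀ u v, L.Adj u v → eps u ≠ eps v)
    (G : ℝ → ℝ) (hG : ∀ x, G (-x) = G x) (f : ℤ → W × Fin 2 → ℝ)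
    (hf : ∀ (t : ℤ) (v : W) (i : Fin 2), Odd (t + eps v) →
      2 * (f (t + 1) (v, i) + f (t - 1) (v, i)) =
        (∑ u, if L.Adj v u then f t (u, 0) else 0) + (∑ u, if L.Adj v u then f t (u, 1) else 0)
        + G ((∑ u, if L.Adj v u then f t (u, 0) else 0)
          - (∑ u, if L.Adj v u then f t (u, 1) else 0)))
    (v : W × Fin 2) (t : ℤ) (ht : Even (t + eps v.1)) : f (t + 4 * (h : ℤ)) v = f t v := by
  classical
  obtain ⟨h0, hM⟩ := chebS_coxeter L h hcox
  -- extension by zero to the wrong parity class, so that the recurrences hold at all `t`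
  let d : ℤ → W → ℝ := fun t w => if Even (t + eps w) then f t (w, 0) - f t (w, 1) else 0
  let p : ℤ → W → ℝ := fun t w => if Even (t + eps w) then f t (w, 0) + f t (w, 1) else 0
  let s : ℤ → W → ℝ := fun t w =>
    if Odd (t + eps w) then G (∑ u, if L.Adj w u then d t u else 0) else 0
  have hflip : ∀ (t : ℤ) (u w : W), L.Adj w u → (Even (t + eps u) ↔ Odd (t + eps w)) := by
    intro t u w hw
    have := hbip _ _ hw
    rw [Int.even_iff, Int.odd_iff]
    rcases heps u with h1 | h1 <;> rcases heps w with h2 | h2 <;> omega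
  have hp1 : ∀ (t : ℤ) (w : W), Even (t + 1 + eps w) ↔ Odd (t + eps w) := by
    intro t w; rw [Int.even_iff, Int.odd_iff]; omega
  have hm1 : ∀ (t : ℤ) (w : W), Even (t - 1 + eps w) ↔ Odd (t + eps w) := by
    intro t w; rw [Int.even_iff, Int.odd_iff]; omega
  have hd : ∀ t w, d (t + 1) w = - d (t - 1) w := by
    intro t w
    simp only [d, hp1, hm1]
    split_ifs with ho
    · linarith [hf t w 0 ho, hf t w 1 ho]
    · simp
  have hd2 : ∀ t w, d (t + 2) w = - d t w := by
    intro t w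
    have := hd (t + 1) w
    rwa [show t + 1 + 1 = t + 2 by ring, show t + 1 - 1 = t by ring] at this
  have hd4 : ∀ (k : ℕ) t w, d (t + 4 * k) w = d t w := by
    intro k
    induction k with
    | zero => simp
    | succ k ih =>
      intro t w
      rw [← ih t w, show t + 4 * ((k + 1 : ℕ) : ℤ) = t + 4 * k + 2 + 2 by push_cast; ring,
        hd2, hd2, neg_neg]
  have hs : ∀ t, s (t + 2) = s t := by
    intro t
    ext w
    have e1 : (∑ u, if L.Adj w u then d (t + 2) u else 0)
        = - ∑ u, if L.Adj w u then d t u else 0 := by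
      rw [← Finset.sum_neg_distrib]
      refine Finset.sum_congr rfl fun u _ => ?_
      split_ifs <;> simp [hd2]
    have e2 : Odd (t + 2 + eps w) ↔ Odd (t + eps w) := by
      rw [Int.odd_iff, Int.odd_iff]; omega
    simp only [s, e1, e2, hG]
  have hp : ∀ t, p (t + 1) + p (t - 1) = (L.adjMatrix ℝ).mulVec (p t) + s t := by
    intro t
    ext w
    simp only [Pi.add_apply, adjMatrix_mulVec_eq]
    by_cases ho : Odd (t + eps w)
    · have e1 : (∑ u, if L.Adj w u then p t u else 0) =
          (∑ u, if L.Adj w u then f t (u, 0) else 0)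
          + (∑ u, if L.Adj w u then f t (u, 1) else 0) := by
        rw [← Finset.sum_add_distrib]
        refine Finset.sum_congr rfl fun u _ => ?_
        split_ifs with hu
        · simp [p, (hflip t u w hu).2 ho]
        · simp
      have e2 : (∑ u, if L.Adj w u then d t u else 0) =
          (∑ u, if L.Adj w u then f t (u, 0) else 0)
          - (∑ u, if L.Adj w u then f t (u, 1) else 0) := by
        rw [← Finset.sum_sub_distrib]
        refine Finset.sum_congr rfl fun u _ => ?_
        split_ifs with hu
        · simp [d, (hflip t u w hu).2 ho]
        · simp
      have e3 : s t w = G ((∑ u, if L.Adj w u then f t (u, 0) else 0)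
          - (∑ u, if L.Adj w u then f t (u, 1) else 0)) := by
        simp only [s, if_pos ho, e2]
      have e4 : p (t + 1) w = f (t + 1) (w, 0) + f (t + 1) (w, 1) :=
        if_pos ((hp1 t w).2 ho)
      have e5 : p (t - 1) w = f (t - 1) (w, 0) + f (t - 1) (w, 1) :=
        if_pos ((hm1 t w).2 ho)
      rw [e1, e3, e4, e5]
      linarith [hf t w 0 ho, hf t w 1 ho]
    · have e1 : (∑ u, if L.Adj w u then p t u else 0) = 0 := by
        refine Finset.sum_eq_zero fun u _ => ?_
        split_ifs with hu
        · exact if_neg fun he => ho ((hflip t u w hu).1 he)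
        · rfl
      have e3 : s t w = 0 := if_neg ho
      have e4 : p (t + 1) w = 0 := if_neg fun he => ho ((hp1 t w).1 he)
      have e5 : p (t - 1) w = 0 := if_neg fun he => ho ((hm1 t w).1 he)
      rw [e1, e3, e4, e5]
  have hper := forced_wave_periodic (L.adjMatrix ℝ) h h0 (by convert hM) p s hp hs
  have hp4 : p (t + 4 * h) v.1 = p t v.1 := by
    rw [← hper t, ← hper (t + 2 * h)]
    congr 1; ring
  have hd4' := hd4 h t v.1
  have ht' : Even (t + 4 * (h : ℤ) + eps v.1) := by
    rw [Int.even_iff] at ht ⊢; omega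
  simp only [p, d, if_pos ht, if_pos ht'] at hp4 hd4'
  obtain ⟨w, i⟩ := v
  fin_cases i
  · change f (t + 4 * (h : ℤ)) (w, 0) = f t (w, 0)
    linarith
  · change f (t + 4 * (h : ℤ)) (w, 1) = f t (w, 1)
    linarith

lemma two_mul_max_eq (a b : ℝ) : 2 * max a b = a + b + |a - b| := by
  rcases le_total a b with h | h
  · rw [max_eq_right h, abs_of_nonpos (by linarith)]; ring
  · rw [max_eq_left h, abs_of_nonneg (by linarith)]; ring

lemma two_mul_log_exp_add_exp (a b : ℝ) :
    2 * Real.log (Real.exp a + Real.exp b) =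
      a + b + 2 * Real.log (Real.exp ((a - b) / 2) + Real.exp (-((a - b) / 2))) := by
  have e : Real.exp a + Real.exp b = Real.exp ((a + b) / 2) *
      (Real.exp ((a - b) / 2) + Real.exp (-((a - b) / 2))) := by
    rw [mul_add, ← Real.exp_add, ← Real.exp_add]
    congr 2 <;> ring
  rw [e, Real.log_mul (Real.exp_pos _).ne' (by positivity), Real.log_exp]
  ring

lemma sum_same {W : Type} [Fintype W] (L : SimpleGraph W) [DecidableRel L.Adj]
    (g : W × Fin 2 → ℝ) (w : W) (i : Fin 2) :
    (∑ q : W × Fin 2, ((if i = q.2 ∧ L.Adj w q.1 then 1 else 0 : ℕ) : ℝ) * g q) =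
      ∑ u, if L.Adj w u then g (u, i) else 0 := by
  rw [Fintype.sum_prod_type]
  refine Finset.sum_congr rfl fun u _ => ?_
  fin_cases i <;> by_cases hu : L.Adj w u <;> simp [hu]

lemma sum_opposite {W : Type} [Fintype W] (L : SimpleGraph W) [DecidableRel L.Adj]
    (g : W × Fin 2 → ℝ) (w : W) (i : Fin 2) :
    (∑ q : W × Fin 2, ((if i ≠ q.2 ∧ L.Adj w q.1 then 1 else 0 : ℕ) : ℝ) * g q) =
      ∑ u, if L.Adj w u then g (u, 1 - i) else 0 := by
  rw [Fintype.sum_prod_type]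
  refine Finset.sum_congr rfl fun u _ => ?_
  fin_cases i <;> by_cases hu : L.Adj w u <;> simp [hu]

/-- Both the tropical and the logarithmic recurrence have this form: the right-hand side is a
symmetric function `F` of the two neighbour sums, with `2 F(a, b) - a - b` an even function
of `a - b`. -/
lemma twist_real' {W : Type} [Fintype W] [DecidableEq W] (L : SimpleGraph W) [DecidableRel L.Adj]
    (h : ℕ) (hcox : HasCoxeterNumber L h) (eps : W → ℤ)
    (heps : ∀ w, eps w = 0 ∨ eps w = 1) (hbip : ∀ u v, L.Adj u v → eps u ≠ eps v)
    (F : ℝ → ℝ → ℝ) (G : ℝ → ℝ) (hG : ∀ x, G (-x) = G x)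
    (hFG : ∀ a b, 2 * F a b = a + b + G (a - b)) (f : ℤ → W × Fin 2 → ℝ)
    (hf : ∀ (t : ℤ) (v : W × Fin 2), Odd (t + eps v.1) →
      f (t + 1) v + f (t - 1) v =
        F (∑ q, ((if v.2 = q.2 ∧ L.Adj v.1 q.1 then 1 else 0 : ℕ) : ℝ) * f t q)
          (∑ q, ((if v.2 ≠ q.2 ∧ L.Adj v.1 q.1 then 1 else 0 : ℕ) : ℝ) * f t q))
    (v : W × Fin 2) (t : ℤ) (ht : Even (t + eps v.1)) : f (t + 4 * (h : ℤ)) v = f t v := by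
  refine twist_real L h hcox eps heps hbip G hG f (fun t w i ho => ?_) v t ht
  rw [hf t (w, i) ho, hFG, sum_same, sum_opposite]
  fin_cases i
  · simp
  · simp only [Fin.mk_one, sub_self]
    rw [← hG, neg_sub, add_comm (∑ u, if L.Adj w u then f t (u, 1) else 0)]

end Twist

/-! ### A positive embedding of the field of rational functions into `ℝ` -/

section Embedding

/-- `ℝ` has infinite transcendence degree over `ℚ`, since a countable transcendence basis would
make `ℝ` countable. -/
lemma exists_algebraicIndependent_real (V : Type) [Finite V] :
    ∃ x : V → ℝ, AlgebraicIndependent ℚ x := by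
  obtain ⟨s, hs⟩ := exists_isTranscendenceBasis ℚ ℝ
  have hinf : Infinite s := by
    by_contra hfin
    rw [not_infinite_iff_finite] at hfin
    have := hs.isAlgebraic
    have h1 := Algebra.IsAlgebraic.cardinalMk_le_max
      (Algebra.adjoin ℚ (Set.range ((↑) : s → ℝ))) ℝ
    have h2 : Cardinal.mk (Algebra.adjoin ℚ (Set.range ((↑) : s → ℝ))) ≤ Cardinal.aleph0 := by
      rw [← Cardinal.mk_congr hs.1.aevalEquiv.toEquiv]
      refine MvPolynomial.cardinalMk_le_max.trans ?_
      simp [Cardinal.mk_le_aleph0]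
    rw [max_eq_right h2] at h1
    exact absurd h1 (not_le.2 (by rw [Cardinal.mk_real]; exact Cardinal.aleph0_lt_continuum))
  cases nonempty_fintype V
  exact ⟨_, hs.1.comp _ (((Fintype.equivFin V).toEmbedding.trans
    (Fin.valEmbedding.trans (Infinite.natEmbedding s))).injective)⟩

/-- Squaring algebraically independent numbers makes them positive and keeps them
algebraically independent. -/
lemma exists_positive_embedding (V : Type) [Finite V] :
    ∃ φ : FractionRing (MvPolynomial V ℚ) →+* ℝ,
      ∀ v, 0 < φ (algebraMap (MvPolynomial V ℚ) _ (MvPolynomial.X v)) := by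
  obtain ⟨x, hx⟩ := exists_algebraicIndependent_real V
  have hsq : AlgebraicIndependent ℚ fun v => x v ^ 2 := by
    simpa using hx.polynomial_aeval_of_transcendental (f := fun _ => Polynomial.X ^ 2)
      (fun _ => (Polynomial.transcendental_X ℚ).pow two_pos)
  let g : MvPolynomial V ℚ →+* ℝ := (MvPolynomial.aeval fun v => x v ^ 2 : _ →ₐ[ℚ] ℝ).toRingHom
  have hg : Function.Injective g := hsq
  refine ⟨IsFractionRing.lift (K := FractionRing (MvPolynomial V ℚ)) hg, fun v => ?_⟩
  rw [IsFractionRing.lift_algebraMap]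
  have := hx.ne_zero v
  simp only [g, AlgHom.toRingHom_eq_coe, RingHom.coe_coe, MvPolynomial.aeval_X]
  positivity

/-- Since the recurrence is subtraction-free, the values of a `T`-system are positive under an
embedding that makes the initial variables positive. -/
lemma tsystem_pos {V : Type} [Fintype V] (eps : V → ℤ) (heps : ∀ v, eps v = 0 ∨ eps v = 1)
    (A B : V → V → ℕ) (hA : ∀ u v, A u v ≠ 0 → eps u ≠ eps v)
    (hB : ∀ u v, B u v ≠ 0 → eps u ≠ eps v)
    (T : ℤ → V → FractionRing (MvPolynomial V ℚ)) (hT : IsTSystem eps A B T)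
    (φ : FractionRing (MvPolynomial V ℚ) →+* ℝ)
    (hφ : ∀ v, 0 < φ (algebraMap (MvPolynomial V ℚ) _ (MvPolynomial.X v)))
    (t : ℤ) (v : V) (ht : Even (t + eps v)) : 0 < φ (T t v) := by
  obtain ⟨hT0, hT1⟩ := hT
  have hprod : ∀ C : V → V → ℕ, (∀ u v, C u v ≠ 0 → eps u ≠ eps v) → ∀ t : ℤ,
      (∀ v, Even (t + eps v) → 0 < φ (T t v)) → ∀ v, Odd (t + eps v) →
      0 < φ (∏ u, T t u ^ C v u) := by
    intro C hC t hpos v ho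
    rw [map_prod]
    refine Finset.prod_pos fun u _ => ?_
    rw [map_pow]
    by_cases hc : C v u = 0
    · simp [hc]
    · refine pow_pos (hpos u ?_) _
      have := hC v u hc
      rw [Int.odd_iff] at ho
      rw [Int.even_iff]
      rcases heps u with h1 | h1 <;> rcases heps v with h2 | h2 <;> omega
  have hmul : ∀ t : ℤ, (∀ v, Even (t + eps v) → 0 < φ (T t v)) → ∀ v, Odd (t + eps v) →
      0 < φ (T (t + 1) v) * φ (T (t - 1) v) := by
    intro t hpos v ho
    rw [← map_mul, hT1 t v ho, map_add]
    exact add_pos (hprod A hA t hpos v ho) (hprod B hB t hpos v ho)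
  have key : ∀ t : ℤ, (∀ v, Even (t + eps v) → 0 < φ (T t v)) ∧
      (∀ v, Even (t + 1 + eps v) → 0 < φ (T (t + 1) v)) := by
    intro t
    induction t using Int.induction_on with
    | zero =>
      constructor
      · intro v hv
        have : eps v = 0 := by
          rw [Int.even_iff] at hv
          rcases heps v with h1 | h1 <;> omega
        have h2 := hT0 v
        rw [this] at h2
        rw [h2]; exact hφ v
      · intro v hv
        have : eps v = 1 := by
          rw [Int.even_iff] at hv
          rcases heps v with h1 | h1 <;> omega
        have h2 := hT0 v
        rw [this] at h2
        rw [zero_add, h2]; exact hφ v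
    | succ k ih =>
      refine ⟨ih.2, fun v hv => ?_⟩
      have := hmul _ ih.2 v (by rw [Int.even_iff] at hv; rw [Int.odd_iff]; omega)
      rw [add_sub_cancel_right] at this
      exact (pos_iff_pos_of_mul_pos this).2
        (ih.1 v (by rw [Int.even_iff] at hv ⊢; omega))
    | pred k ih =>
      rw [sub_add_cancel]
      refine ⟨fun v hv => ?_, ih.1⟩
      have := hmul _ ih.1 v (by rw [Int.even_iff] at hv; rw [Int.odd_iff]; omega)
      exact (pos_iff_pos_of_mul_pos this).1
        (ih.2 v (by rw [Int.even_iff] at hv ⊢; omega))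
  exact (key t).1 v ht

end Embedding

/-- the `T`-system and the tropical `T`-systems of the twist `Λ × Λ` of an
ADE Dynkin diagram `Λ` with Coxeter number `h` are periodic with period `4h`. -/
theorem twist_periodicity
    {W : Type} [Fintype W] [DecidableEq W]
    (L : SimpleGraph W) [DecidableRel L.Adj]
    (h : ℕ) (hcox : HasCoxeterNumber L h)
    (epsL : W → ℤ) (heps : ∀ w, epsL w = 0 ∨ epsL w = 1)
    (hbip : ∀ u v, L.Adj u v → epsL u ≠ epsL v) :
    (∀ T : ℤ → W × Fin 2 → FractionRing (MvPolynomial (W × Fin 2) ℚ),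
      IsTSystem (fun p => epsL p.1)
        (fun p q => if p.2 = q.2 ∧ L.Adj p.1 q.1 then 1 else 0)
        (fun p q => if p.2 ≠ q.2 ∧ L.Adj p.1 q.1 then 1 else 0) T →
      ∀ (v : W × Fin 2) (t : ℤ), Even (t + epsL v.1) →
        T (t + 4 * (h : ℤ)) v = T t v) ∧
    (∀ (lam : W × Fin 2 → ℝ) (f : ℤ → W × Fin 2 → ℝ),
      IsTropicalTSystem (fun p => epsL p.1)
        (fun p q => if p.2 = q.2 ∧ L.Adj p.1 q.1 then 1 else 0)
        (fun p q => if p.2 ≠ q.2 ∧ L.Adj p.1 q.1 then 1 else 0) lam f →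
      ∀ (v : W × Fin 2) (t : ℤ), Even (t + epsL v.1) →
        f (t + 4 * (h : ℤ)) v = f t v) := by
  constructor
  · intro T hT v t ht
    obtain ⟨φ, hφ⟩ := exists_positive_embedding (W × Fin 2)
    have hpos := tsystem_pos (fun p : W × Fin 2 => epsL p.1) (fun p => heps p.1) _ _
      (fun p q hpq => hbip p.1 q.1 (by
        by_contra hc
        exact hpq (if_neg fun h' => hc h'.2)))
      (fun p q hpq => hbip p.1 q.1 (by
        by_contra hc
        exact hpq (if_neg fun h' => hc h'.2))) T hT φ hφ
    have hexp : ∀ (C : W × Fin 2 → W × Fin 2 → ℕ),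
        (∀ p q, C p q ≠ 0 → L.Adj p.1 q.1) → ∀ (t : ℤ) (p : W × Fin 2), Odd (t + epsL p.1) →
        φ (∏ q, T t q ^ C p q) = Real.exp (∑ q, (C p q : ℝ) * Real.log (φ (T t q))) := by
      intro C hC t p ho
      rw [map_prod, Real.exp_sum]
      refine Finset.prod_congr rfl fun q _ => ?_
      rw [map_pow]
      by_cases hc : C p q = 0
      · simp [hc]
      · have hq : Even (t + epsL q.1) := by
          have := hbip _ _ (hC p q hc)
          rw [Int.odd_iff] at ho
          rw [Int.even_iff]
          rcases heps p.1 with h1 | h1 <;> rcases heps q.1 with h2 | h2 <;> omega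
        rw [Real.exp_nat_mul, Real.exp_log (hpos t q hq)]
    have hlog := twist_real' L h hcox epsL heps hbip
      (fun a b => Real.log (Real.exp a + Real.exp b))
      (fun x => 2 * Real.log (Real.exp (x / 2) + Real.exp (-(x / 2))))
      (fun x => by rw [neg_div, neg_neg, add_comm]) two_mul_log_exp_add_exp
      (fun t p => Real.log (φ (T t p))) (by
        intro t p ho
        have hodd := ho
        rw [Int.odd_iff] at ho
        have hp1 := hpos (t + 1) p (by rw [Int.even_iff]; omega)
        have hp2 := hpos (t - 1) p (by rw [Int.even_iff]; omega)
        rw [← Real.log_mul hp1.ne' hp2.ne', ← map_mul, hT.2 t p hodd, map_add]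
        beta_reduce
        congr 2
        · refine hexp (fun p q => if p.2 = q.2 ∧ L.Adj p.1 q.1 then 1 else 0) ?_ t p hodd
          intro p q hpq
          by_contra hc
          exact hpq (if_neg fun h' => hc h'.2)
        · refine hexp (fun p q => if p.2 ≠ q.2 ∧ L.Adj p.1 q.1 then 1 else 0) ?_ t p hodd
          intro p q hpq
          by_contra hc
          exact hpq (if_neg fun h' => hc h'.2)) v t ht
    refine φ.injective (Real.log_injOn_pos (hpos _ v ?_) (hpos _ v ht) hlog)
    rw [Int.even_iff] at ht ⊢
    omega
  · intro lam f hf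
    exact twist_real' L h hcox epsL heps hbip max (fun x => |x|) abs_neg two_mul_max_eq f hf.2
end
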